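/- arXiv:2310.17337 — 2 statements merged into one kernel-verified Lean document; each statement's English description precedes it below -/
import Mathlib

section
/- If G is a connected graph of order n that is not isomorphic to any of P_3, C_3, or C_6, then ι(G, P_3) ≤ 2n/7. -/
/-!
The bound is proved for vertex sets `S ⊆ V` inducing a connected subgraph, by studying a minimal
counterexample `S` (`PThree.Crit`). Call a connected set bad if it induces `P_3`, `C_3` or `C_6`.

*Gluing.* Choose a set `D₀`, delete a set `Y` of vertices lying on no `P_3` that survives `D₀`, and
isolate the components of `S \ Y` separately. By minimality a component that is not bad costs at
most `2/7` of its order. A bad one exceeds this by `1/7` (order three) or `2/7` (six-cycle), but if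
`D₀` dominates one of its vertices then one vertex fewer is needed. Hence, in units of `1/7`, the
quantity `7|D₀| + ∑ (excess - 7 · [bad and dominated somewhere])` exceeds `2|Y|` for every such
choice (`Crit.glue`). With `D₀ = Y = {x}` this shows that no bad component of `S \ {x}` exists
(`Crit.no_hanging`).

*A vertex `v` of degree `d ≥ 3`.* Let `b` be the number of bad components of `S \ N[v]`. Each is
attached to at least two neighbours of `v`. A neighbour of `v` is attached to at most two of them,
whence `b ≤ d`, and then choosing `v` together with `x` shows that no vertex `x` is attached to two
of them, whence `2 · b ≤ d`. On the other hand gluing with `D₀ = {v}` gives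
`2 · (d + 1) < 7 + 2 · b`. These inequalities force `b = d - 2` and all the bad components to be six-cycles (`Crit.tight`).

Let `H = f 0 … f 5` be one of them, with `f 0` adjacent to a neighbour `x` of `v`. The same
statement at `f 0`, where every bad component left over has to contain `v`, gives
`deg (f 0) = 3 = d` and a six-cycle through `v` and two neighbours `x'`, `x''` of `v` which closes
up through `f 2`, `f 3`, `f 4` (`Crit.config`). So `v, x, x', x''` and `H` form a set of ten
vertices which is attached to the rest of the graph through `x` alone and is isolated by `{x, f 3}`.
Since `2 · 7 ≤ 2 · 10`, gluing gives a contradiction (`Crit.max_deg`).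

*Maximum degree two.* What remains are paths and cycles; a longest path is spanning and every fifth
vertex of it is chosen (`done_of_deg_le_two`), which suffices except for `P_3`, `C_3` and `C_6`;
the path `P_6` is treated separately.
-/

open SimpleGraph

/-- `H` has a copy in `G`, i.e. `H` is isomorphic to a (not necessarily induced)
subgraph of `G`. -/
def HasCopy {W V : Type*} (H : SimpleGraph W) (G : SimpleGraph V) : Prop :=
  ∃ f : H →g G, Function.Injective f

/-- The closed neighbourhood `N[D]` of a set of vertices `D` in `G`. -/
def closedNbhd {V : Type*} (G : SimpleGraph V) (D : Set V) : Set V :=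
  D ∪ {v | ∃ u ∈ D, G.Adj u v}

/-- `D` is an `H`-isolating set of `G`: the subgraph of `G` induced on the complement
of `N[D]` contains no copy of `H`. -/
def IsIsolating {V W : Type*} (G : SimpleGraph V) (H : SimpleGraph W) (D : Set V) : Prop :=
  ¬ HasCopy H (G.induce (closedNbhd G D)ᶜ)

/-- The `H`-isolation number of `G`: the minimum cardinality of an `H`-isolating set. -/
noncomputable def isolNum {V W : Type*} (G : SimpleGraph V) (H : SimpleGraph W) : ℕ :=
  sInf {n | ∃ D : Set V, IsIsolating G H D ∧ D.ncard = n}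

/-- `cons(T, C_k)`: from `T` and `|V(T)|` pairwise disjoint copies of the cycle `C_k`,
join each vertex of `T` to one vertex of its own copy of `C_k` by a single edge. -/
def consGraph {α : Type*} (T : SimpleGraph α) (k : ℕ) :
    SimpleGraph (α ⊕ α × Fin k) :=
  SimpleGraph.fromRel (fun x y =>
    match x, y with
    | Sum.inl a, Sum.inl b => T.Adj a b
    | Sum.inl a, Sum.inr p => a = p.1 ∧ p.2.val = 0
    | Sum.inr p, Sum.inr q => p.1 = q.1 ∧ (cycleGraph k).Adj p.2 q.2
    | _, _ => False)

/-- `G ∈ 𝒢ₖ`: `G` is isomorphic to `cons(T, C_k)` for some tree `T`. -/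
def MemG {V : Type*} (G : SimpleGraph V) (k : ℕ) : Prop :=
  ∃ (n : ℕ) (T : SimpleGraph (Fin n)), T.IsTree ∧ Nonempty (G ≃g consGraph T k)

/-- The diamond graph `K₄⁻`, obtained from `K₄` by deleting one edge. -/
def diamondGraph : SimpleGraph (Fin 4) :=
  (completeGraph (Fin 4)).deleteEdges {s(0, 1)}

/-- `C₄⁺`: a `4`-cycle with a pendant edge attached to one of its vertices. -/
def c4plus : SimpleGraph (Fin 5) :=
  SimpleGraph.fromEdgeSet {s(0, 1), s(1, 2), s(2, 3), s(3, 0), s(0, 4)}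

namespace PThree

open Finset

section
open scoped Classical

variable {V : Type*} {G : SimpleGraph V}

/-- `a` lies in the closed neighbourhood of `D`. -/
def Dom (G : SimpleGraph V) (D : Finset V) (a : V) : Prop := ∃ u ∈ D, u = a ∨ G.Adj u a

/-- `D` is a `P_3`-isolating set for the induced subgraph on `S`, except that `D` is not required
to be contained in `S`. -/
def Isol (G : SimpleGraph V) (S D : Finset V) : Prop :=
  ∀ ⦃a b c⦄, a ∈ S → b ∈ S → c ∈ S → ¬ Dom G D a → ¬ Dom G D b → ¬ Dom G D c →
    G.Adj a b → G.Adj b c → a = c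

/-- The desired bound holds for the induced subgraph on `S`. -/
def Done (G : SimpleGraph V) (S : Finset V) : Prop := ∃ D, 7 * #D ≤ 2 * #S ∧ Isol G S D

/-- `T` is a union of connected components of the induced subgraph on `S`. -/
def Closed (G : SimpleGraph V) (S T : Finset V) : Prop :=
  T ⊆ S ∧ ∀ a ∈ T, ∀ b ∈ S, G.Adj a b → b ∈ T

/-- The induced subgraph on `C` is connected, phrased through the absence of proper closed
subsets. -/
def Conn (G : SimpleGraph V) (C : Finset V) : Prop :=
  C.Nonempty ∧ ∀ T, Closed G C T → T.Nonempty → T = C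

/-- `C` is a connected component of the induced subgraph on `S`. -/
def IsComp (G : SimpleGraph V) (S C : Finset V) : Prop := Closed G S C ∧ Conn G C

/-- The connected components of the induced subgraph on `S`. -/
noncomputable def comps (G : SimpleGraph V) (S : Finset V) : Finset (Finset V) :=
  S.powerset.filter (IsComp G S)

/-- `C` induces a six-cycle, traversed by `f`. -/
def HexBy (G : SimpleGraph V) (C : Finset V) (f : Fin 6 → V) : Prop :=
  Function.Injective f ∧ (∀ a, a ∈ C ↔ ∃ i, f i = a) ∧
    ∀ i j, G.Adj (f i) (f j) ↔ (j = i + 1 ∨ i = j + 1)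

/-- `C` induces a six-cycle. -/
def Hex (G : SimpleGraph V) (C : Finset V) : Prop := ∃ f, HexBy G C f

/-- For connected `C`: the induced subgraph is one of the exceptional graphs `P_3`, `C_3`, `C_6`. -/
def Bad (G : SimpleGraph V) (C : Finset V) : Prop := #C = 3 ∨ Hex G C

/-- Seven times the amount by which the isolation number of an exceptional component
exceeds two sevenths of its order. -/
noncomputable def exc (G : SimpleGraph V) (C : Finset V) : ℤ :=
  if #C = 3 then 1 else if Hex G C then 2 else 0

/-- Some vertex of `D` has a neighbour in `C`. -/
def Linked (G : SimpleGraph V) (D C : Finset V) : Prop := ∃ u ∈ D, ∃ y ∈ C, G.Adj u y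

/-- The neighbours of `v` in `S`. -/
noncomputable def nb (G : SimpleGraph V) (S : Finset V) (v : V) : Finset V := S.filter (G.Adj v)

/-- `S` is a minimal connected counterexample. -/
structure Crit (G : SimpleGraph V) (S : Finset V) : Prop where
  conn : Conn G S
  notDone : ¬ Done G S
  ih : ∀ C, C ⊂ S → Conn G C → ¬ Bad G C → Done G C

/-! ### Components -/

lemma mem_nb {S : Finset V} {v a : V} : a ∈ nb G S v ↔ a ∈ S ∧ G.Adj v a := by simp [nb]

lemma mem_comps {S C : Finset V} : C ∈ comps G S ↔ IsComp G S C := by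
  simp only [comps, mem_filter, mem_powerset, and_iff_right_iff_imp]
  exact fun h => h.1.1

lemma exists_comp {S : Finset V} {a : V} (ha : a ∈ S) : ∃ C, IsComp G S C ∧ a ∈ C := by
  have hne : (S.powerset.filter (fun C => Closed G S C ∧ a ∈ C)).Nonempty :=
    ⟨S, mem_filter.2 ⟨mem_powerset_self S, ⟨Subset.rfl, fun _ _ b hb _ => hb⟩, ha⟩⟩
  obtain ⟨C, hC, hmin⟩ := exists_min_image _ Finset.card hne
  simp only [mem_filter, mem_powerset] at hC hmin
  obtain ⟨-, hcl, haC⟩ := hC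
  refine ⟨C, ⟨hcl, ⟨a, haC⟩, ?_⟩, haC⟩
  intro T hT hTne
  by_cases haT : a ∈ T
  · refine eq_of_subset_of_card_le hT.1 (hmin T ⟨hT.1.trans hcl.1, ⟨hT.1.trans hcl.1, ?_⟩, haT⟩)
    intro x hx y hy hxy
    exact hT.2 x hx y (hcl.2 x (hT.1 hx) y hy hxy) hxy
  · exfalso
    have h1 := hmin (C \ T) ⟨sdiff_subset.trans hcl.1, ⟨sdiff_subset.trans hcl.1, ?_⟩, by
      simp [haC, haT]⟩
    · rw [card_sdiff_of_subset hT.1] at h1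
      have := card_pos.2 hTne
      have := card_le_card hT.1
      omega
    · intro x hx y hy hxy
      simp only [mem_sdiff] at hx ⊢
      exact ⟨hcl.2 x hx.1 y hy hxy, fun hyT => hx.2 (hT.2 y hyT x hx.1 hxy.symm)⟩

lemma subset_comp {S C K : Finset V} (hC : IsComp G S C) (hK : Conn G K) (hKS : K ⊆ S) {a : V}
    (h1 : a ∈ K) (h2 : a ∈ C) : K ⊆ C := by
  have := hK.2 (K ∩ C) ⟨inter_subset_left, ?_⟩ ⟨a, by simp [h1, h2]⟩
  · rw [← this]; exact inter_subset_right
  · intro x hx y hy hxy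
    simp only [mem_inter] at hx ⊢
    exact ⟨hy, hC.1.2 x hx.2 y (hKS hy) hxy⟩

lemma comp_unique {S C K : Finset V} (hC : IsComp G S C) (hK : IsComp G S K) {a : V}
    (h1 : a ∈ C) (h2 : a ∈ K) : C = K :=
  (subset_comp hK hC.2 hC.1.1 h1 h2).antisymm (subset_comp hC hK.2 hK.1.1 h2 h1)

lemma sum_comps (S : Finset V) : ∑ C ∈ comps G S, #C = #S := by
  rw [← card_biUnion]
  · congr 1
    ext a
    simp only [mem_biUnion, mem_comps]
    constructor
    · rintro ⟨C, hC, ha⟩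
      exact hC.1.1 ha
    · exact exists_comp
  · intro C hC K hK hne
    simp only [mem_coe, mem_comps] at hC hK
    rw [Function.onFun, Finset.disjoint_left]
    exact fun a h1 h2 => hne (comp_unique hC hK h1 h2)

lemma comp_adj {S Y C : Finset V} (hS : Conn G S) (hY : Y.Nonempty) (hYS : Y ⊆ S)
    (hC : IsComp G (S \ Y) C) : ∃ y ∈ Y, ∃ c ∈ C, G.Adj y c := by
  by_contra! h
  have := hS.2 C ⟨hC.1.1.trans sdiff_subset, ?_⟩ hC.2.1
  · obtain ⟨y, hy⟩ := hY
    have h1 := hYS hy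
    rw [← this] at h1
    have := hC.1.1 h1
    simp [hy] at this
  · intro a ha b hb hab
    refine hC.1.2 a ha b ?_ hab
    simp only [mem_sdiff, hb, true_and]
    exact fun hbY => h b hbY a ha hab.symm

/-! ### Six-cycles -/

lemma HexBy.shift {C : Finset V} {f : Fin 6 → V} (h : HexBy G C f) (k : Fin 6) :
    HexBy G C (fun i => f (i + k)) := by
  refine ⟨fun i j hij => add_right_cancel (h.1 hij), fun a => ?_, fun i j => ?_⟩
  · rw [h.2.1]
    exact ⟨fun ⟨i, hi⟩ => ⟨i - k, by simpa using hi⟩, fun ⟨i, hi⟩ => ⟨_, hi⟩⟩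
  · rw [h.2.2]
    revert i j k
    decide

lemma HexBy.card {C : Finset V} {f : Fin 6 → V} (h : HexBy G C f) : #C = 6 := by
  have : C = univ.image f := by ext a; simp [h.2.1]
  rw [this, card_image_of_injective _ h.1]
  simp

lemma Hex.card {C : Finset V} (h : Hex G C) : #C = 6 := h.choose_spec.card

lemma Hex.based {C : Finset V} (h : Hex G C) {a : V} (ha : a ∈ C) :
    ∃ f, HexBy G C f ∧ f 0 = a := by
  obtain ⟨f, hf⟩ := h
  obtain ⟨i, rfl⟩ := (hf.2.1 a).1 ha
  exact ⟨_, hf.shift i, by simp⟩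

lemma HexBy.conn_erase {C : Finset V} {f : Fin 6 → V} (h : HexBy G C f) :
    Conn G (C.erase (f 0)) := by
  have hm : ∀ i, i ≠ 0 → f i ∈ C.erase (f 0) := fun i hi =>
    mem_erase.2 ⟨fun e => hi (h.1 e), (h.2.1 _).2 ⟨i, rfl⟩⟩
  refine ⟨⟨f 1, hm 1 (by decide)⟩, fun T hT hne => hT.1.antisymm ?_⟩
  obtain ⟨a, ha⟩ := hne
  have haC := hT.1 ha
  rw [mem_erase, h.2.1] at haC
  obtain ⟨ha0, i, rfl⟩ := haC
  have step : ∀ i j, j ≠ 0 → (j = i + 1 ∨ i = j + 1) → f i ∈ T → f j ∈ T := fun i j hj hij hi =>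
    hT.2 _ hi _ (hm j hj) ((h.2.2 i j).2 hij)
  have h12 := step 1 2 (by decide) (by decide)
  have h23 := step 2 3 (by decide) (by decide)
  have h34 := step 3 4 (by decide) (by decide)
  have h45 := step 4 5 (by decide) (by decide)
  have h21 := step 2 1 (by decide) (by decide)
  have h32 := step 3 2 (by decide) (by decide)
  have h43 := step 4 3 (by decide) (by decide)
  have h54 := step 5 4 (by decide) (by decide)
  intro b hb
  rw [mem_erase, h.2.1] at hb
  obtain ⟨hb0, j, rfl⟩ := hb
  fin_cases i <;> fin_cases j <;> simp_all

lemma Bad.card {C : Finset V} (h : Bad G C) : #C = 3 ∨ #C = 6 := h.imp_right Hex.card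

/-! ### Gluing isolating sets -/

lemma Isol.mono {S D D' : Finset V} (h : Isol G S D) (hD : D ⊆ D') : Isol G S D' := by
  have key : ∀ a, ¬ Dom G D' a → ¬ Dom G D a := fun a ha ⟨u, hu, h⟩ => ha ⟨u, hD hu, h⟩
  exact fun a b c ha hb hc na nb nc => h ha hb hc (key _ na) (key _ nb) (key _ nc)

/-- A path on three vertices needs three undominated vertices. -/
lemma isol_of_card {S D : Finset V} (T : Finset V) (hT : #T ≤ 2)
    (h : ∀ a ∈ S, ¬ Dom G D a → a ∈ T) : Isol G S D := by
  intro a b c ha hb hc na nb nc hab hbc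
  by_contra hac
  have : ({a, b, c} : Finset V) ⊆ T := by
    intro z hz
    simp only [mem_insert, mem_singleton] at hz
    rcases hz with rfl | rfl | rfl
    · exact h _ ha na
    · exact h _ hb nb
    · exact h _ hc nc
  have h3 : #({a, b, c} : Finset V) = 3 := card_eq_three.2 ⟨a, b, c, hab.ne, hac, hbc.ne, rfl⟩
  have := card_le_card this
  omega

lemma Hex.isol {C : Finset V} (h : Hex G C) {a : V} (ha : a ∈ C) {D₀ : Finset V}
    (hd : Dom G D₀ a) : ∃ u, Isol G C (D₀ ∪ {u}) := by
  obtain ⟨f, hf, rfl⟩ := h.based ha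
  refine ⟨f 3, isol_of_card {f 1, f 5} card_le_two ?_⟩
  intro a ha hna
  obtain ⟨i, rfl⟩ := (hf.2.1 a).1 ha
  have h0 : i ≠ 0 := by
    rintro rfl
    obtain ⟨u, hu, h⟩ := hd
    exact hna ⟨u, by simp [hu], h⟩
  have h3 : i ≠ 3 := by rintro rfl; exact hna ⟨f 3, by simp, by simp⟩
  have h2 : i ≠ 2 := by
    rintro rfl; exact hna ⟨f 3, by simp, Or.inr ((hf.2.2 _ _).2 (by decide))⟩
  have h4 : i ≠ 4 := by
    rintro rfl; exact hna ⟨f 3, by simp, Or.inr ((hf.2.2 _ _).2 (by decide))⟩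
  have hi : ∀ i : Fin 6, i ≠ 0 → i ≠ 3 → i ≠ 2 → i ≠ 4 → i = 1 ∨ i = 5 := by decide
  have := hi i h0 h3 h2 h4
  rcases this with rfl | rfl <;> simp

/-- The cost of a component `C` once `D₀` has been chosen: an exceptional component one of whose
vertices is already dominated needs one vertex less than its isolation number. -/
lemma comp_cost {C : Finset V} (hne : C.Nonempty) (h : ¬ Bad G C → Done G C) (D₀ : Finset V) :
    ∃ D, (7 * #D : ℤ) ≤ 2 * #C + (exc G C - if Bad G C ∧ Linked G D₀ C then 7 else 0) ∧
      Isol G C (D₀ ∪ D) := by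
  by_cases hb : Bad G C
  · by_cases h3 : #C = 3
    · simp only [exc, h3, if_true, hb, true_and]
      split_ifs with hl
      · obtain ⟨u, hu, y, hy, huy⟩ := hl
        refine ⟨∅, by simp, isol_of_card (C.erase y) (by rw [card_erase_of_mem hy]; omega) ?_⟩
        intro a ha hna
        refine mem_erase.2 ⟨?_, ha⟩
        rintro rfl
        exact hna ⟨u, by simp [hu], Or.inr huy⟩
      · obtain ⟨y, hy⟩ := hne
        refine ⟨{y}, by simp, isol_of_card (C.erase y) (by rw [card_erase_of_mem hy]; omega) ?_⟩
        intro a ha hna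
        refine mem_erase.2 ⟨?_, ha⟩
        rintro rfl
        exact hna ⟨a, by simp, Or.inl rfl⟩
    · have hx : Hex G C := hb.resolve_left h3
      have h6 := hx.card
      have he : exc G C = 2 := by rw [exc, if_neg h3, if_pos hx]
      simp only [he, hb, true_and, h6]
      split_ifs with hl
      · obtain ⟨u, hu, y, hy, huy⟩ := hl
        obtain ⟨w, hw⟩ := hx.isol hy ⟨u, hu, Or.inr huy⟩
        exact ⟨{w}, by simp, hw⟩
      · obtain ⟨y, hy⟩ := hne
        obtain ⟨w, hw⟩ := hx.isol hy (D₀ := D₀ ∪ {y}) ⟨y, by simp, Or.inl rfl⟩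
        refine ⟨{y, w}, ?_, hw.mono (by grind)⟩
        have : #({y, w} : Finset V) ≤ 2 := card_le_two
        push_cast
        omega
  · obtain ⟨D, hD, hi⟩ := h hb
    refine ⟨D, ?_, hi.mono subset_union_right⟩
    have : exc G C = 0 := by
      unfold exc
      rw [if_neg (fun e => hb (Or.inl e)), if_neg (fun e => hb (Or.inr e))]
    simp only [this, hb, false_and, if_false]
    push_cast
    omega

/-- In a minimal counterexample, no choice of a set `D₀` and a set `Y` of vertices lying on no
surviving `P_3` is efficient, the components of the remainder being charged as in `comp_cost`. -/
lemma Crit.glue {S : Finset V} (h : Crit G S) {D₀ Y : Finset V} (hYS : Y ⊆ S) (hY : Y.Nonempty)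
    (hp : ∀ ⦃a b c⦄, a ∈ S → b ∈ S → c ∈ S → ¬ Dom G D₀ a → ¬ Dom G D₀ b → ¬ Dom G D₀ c →
      G.Adj a b → G.Adj b c → a ≠ c → a ∉ Y ∧ b ∉ Y ∧ c ∉ Y)
    (hle : (7 * #D₀ : ℤ) + ∑ C ∈ comps G (S \ Y),
      (exc G C - if Bad G C ∧ Linked G D₀ C then 7 else 0) ≤ 2 * #Y) : False := by
  have hc : ∀ C ∈ comps G (S \ Y), ∃ D, (7 * #D : ℤ) ≤
      2 * #C + (exc G C - if Bad G C ∧ Linked G D₀ C then 7 else 0) ∧ Isol G C (D₀ ∪ D) := by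
    intro C hC
    rw [mem_comps] at hC
    refine comp_cost hC.2.1 (h.ih C ?_ hC.2) D₀
    refine (ssubset_iff_of_subset (hC.1.1.trans sdiff_subset)).2 ?_
    obtain ⟨y, hy⟩ := hY
    refine ⟨y, hYS hy, fun hyC => ?_⟩
    have := hC.1.1 hyC
    simp [hy] at this
  choose! D hD hI using hc
  refine h.notDone ⟨D₀ ∪ (comps G (S \ Y)).biUnion D, ?_, ?_⟩
  · have h1 := card_union_le D₀ ((comps G (S \ Y)).biUnion D)
    have h2 : #((comps G (S \ Y)).biUnion D) ≤ ∑ C ∈ comps G (S \ Y), #(D C) := card_biUnion_le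
    have h3 := sum_le_sum hD
    have h4 := sum_comps (G := G) (S \ Y)
    rw [sum_add_distrib, ← mul_sum, ← mul_sum] at h3
    rw [card_sdiff_of_subset hYS] at h4
    have h5 := card_le_card hYS
    zify at h2 h4
    rw [h4] at h3
    omega
  · intro a b c ha hb hcS na nb nc hab hbc
    by_contra hac
    have key : ∀ D' ⊆ D₀ ∪ (comps G (S \ Y)).biUnion D, ∀ z,
        ¬ Dom G (D₀ ∪ (comps G (S \ Y)).biUnion D) z → ¬ Dom G D' z :=
      fun D' hD' z hz ⟨u, hu, h⟩ => hz ⟨u, hD' hu, h⟩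
    have hs := key D₀ subset_union_left
    obtain ⟨h1, h2, h3⟩ := hp ha hb hcS (hs _ na) (hs _ nb) (hs _ nc) hab hbc hac
    obtain ⟨C, hC, hbC⟩ := exists_comp (G := G) (mem_sdiff.2 ⟨hb, h2⟩)
    have hs' := key (D₀ ∪ D C) (union_subset_union_right
      (subset_biUnion_of_mem D (mem_comps.2 hC)))
    exact hac (hI C (mem_comps.2 hC) (hC.1.2 b hbC a (mem_sdiff.2 ⟨ha, h1⟩) hab.symm) hbC
      (hC.1.2 b hbC c (mem_sdiff.2 ⟨hcS, h3⟩) hbc) (hs' _ na) (hs' _ nb) (hs' _ nc) hab hbc)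

lemma exc_eq_zero {C : Finset V} (h : ¬ Bad G C) : exc G C = 0 := by
  unfold exc
  rw [if_neg (fun e => h (Or.inl e)), if_neg (fun e => h (Or.inr e))]

lemma exc_le (C : Finset V) : exc G C ≤ 2 := by unfold exc; split_ifs <;> simp

lemma cost_nonpos {C D₀ : Finset V} (h : Bad G C → Linked G D₀ C) :
    (exc G C - if Bad G C ∧ Linked G D₀ C then 7 else 0) ≤ 0 := by
  by_cases hb : Bad G C
  · have := exc_le (G := G) C
    simp only [hb, h hb, and_self, if_true]
    omega
  · simp [hb, exc_eq_zero hb]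

lemma Crit.glue_linked {S : Finset V} (h : Crit G S) {D₀ Y : Finset V} (hYS : Y ⊆ S)
    (hY : Y.Nonempty)
    (hp : ∀ ⦃a b c⦄, a ∈ S → b ∈ S → c ∈ S → ¬ Dom G D₀ a → ¬ Dom G D₀ b → ¬ Dom G D₀ c →
      G.Adj a b → G.Adj b c → a ≠ c → a ∉ Y ∧ b ∉ Y ∧ c ∉ Y)
    (hl : ∀ C, IsComp G (S \ Y) C → Bad G C → Linked G D₀ C)
    (hle : 7 * #D₀ ≤ 2 * #Y) : False := by
  refine h.glue hYS hY hp ?_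
  have := sum_nonpos (s := comps G (S \ Y)) fun C hC =>
    cost_nonpos (G := G) (D₀ := D₀) (hl C (mem_comps.1 hC))
  omega

/-- If `Y` is dominated by `D₀`, no surviving `P_3` meets `Y`. -/
lemma protect_of_dom {S D₀ Y : Finset V} (h : ∀ y ∈ Y, Dom G D₀ y) :
    ∀ ⦃a b c⦄, a ∈ S → b ∈ S → c ∈ S → ¬ Dom G D₀ a → ¬ Dom G D₀ b → ¬ Dom G D₀ c →
      G.Adj a b → G.Adj b c → a ≠ c → a ∉ Y ∧ b ∉ Y ∧ c ∉ Y :=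
  fun _ _ _ _ _ _ na nb nc _ _ _ => ⟨fun e => na (h _ e), fun e => nb (h _ e), fun e => nc (h _ e)⟩

/-- No exceptional subgraph hangs on a single vertex `x`: otherwise put `x` into the isolating
set, which saves one vertex on every exceptional component of `S \ {x}`. -/
lemma Crit.no_hanging {S B : Finset V} (h : Crit G S) {x : V} (hx : x ∈ S)
    (hB : IsComp G (S \ {x}) B) (hbad : Bad G B) : False := by
  have hxS : ({x} : Finset V) ⊆ S := by simpa using hx
  have hlink : ∀ C, IsComp G (S \ {x}) C → Linked G {x} C := by
    intro C hC
    obtain ⟨y, hy, c, hc, hyc⟩ := comp_adj h.conn (by simp) hxS hC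
    exact ⟨y, hy, c, hc, hyc⟩
  refine h.glue (D₀ := {x}) (Y := {x}) hxS (by simp)
    (protect_of_dom fun y hy => ⟨y, hy, Or.inl rfl⟩) ?_
  rw [← add_sum_erase _ _ (mem_comps.2 hB)]
  have h1 := sum_nonpos (s := (comps G (S \ {x})).erase B) fun C hC =>
    cost_nonpos (G := G) (D₀ := {x}) fun _ => hlink C (mem_comps.1 (mem_of_mem_erase hC))
  have h2 := exc_le (G := G) B
  simp only [hbad, hlink B hB, and_self, if_true, card_singleton] at h1 ⊢
  push_cast
  omega

/-! ### Exceptional components left over by a closed neighbourhood -/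

/-- What remains of `S` after the closed neighbourhood of `v` is deleted. -/
noncomputable def rest (G : SimpleGraph V) (S : Finset V) (v : V) : Finset V :=
  S \ insert v (nb G S v)

/-- The exceptional components of `rest G S v`. -/
noncomputable def badAt (G : SimpleGraph V) (S : Finset V) (v : V) : Finset (Finset V) :=
  (comps G (rest G S v)).filter (Bad G)

lemma mem_badAt {S C : Finset V} {v : V} :
    C ∈ badAt G S v ↔ IsComp G (rest G S v) C ∧ Bad G C := by
  simp [badAt, mem_comps]

lemma mem_rest {S : Finset V} {v a : V} :
    a ∈ rest G S v ↔ a ∈ S ∧ a ≠ v ∧ ¬ G.Adj v a := by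
  simp only [rest, mem_sdiff, mem_insert, mem_nb]
  tauto

lemma linked_singleton {x : V} {C : Finset V} : Linked G {x} C ↔ ∃ y ∈ C, G.Adj x y := by
  simp [Linked]

lemma sum_cost (F : Finset (Finset V)) (D₀ : Finset V) :
    ∑ C ∈ F, (exc G C - if Bad G C ∧ Linked G D₀ C then 7 else 0) =
      ∑ C ∈ F.filter (Bad G), exc G C - 7 * #((F.filter (Bad G)).filter (Linked G D₀)) := by
  rw [sum_sub_distrib, filter_filter, ← sum_filter, sum_const, sum_filter]
  congr 1
  · refine sum_congr rfl fun C _ => ?_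
    split_ifs with h
    · rfl
    · exact exc_eq_zero h
  · simp [mul_comm]

lemma insert_nb_subset {S : Finset V} {v : V} (hv : v ∈ S) : insert v (nb G S v) ⊆ S :=
  insert_subset hv (filter_subset _ _)

lemma card_insert_nb (S : Finset V) (v : V) : #(insert v (nb G S v)) = #(nb G S v) + 1 :=
  card_insert_of_notMem (by simp [mem_nb])

/-- Isolating with `D₀ ∋ v` and deleting the closed neighbourhood of `v` is not efficient. -/
lemma Crit.glue_nb {S : Finset V} (h : Crit G S) {v : V} (hv : v ∈ S) {D₀ : Finset V}
    (hvD : v ∈ D₀) :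
    2 * (#(nb G S v) + 1 : ℤ) < 7 * #D₀ + ∑ C ∈ badAt G S v, exc G C -
      7 * #((badAt G S v).filter (Linked G D₀)) := by
  by_contra! hle
  refine h.glue (D₀ := D₀) (Y := insert v (nb G S v)) (insert_nb_subset hv) (by simp)
    (protect_of_dom ?_) ?_
  · intro y hy
    rw [mem_insert, mem_nb] at hy
    exact ⟨v, hvD, hy.imp Eq.symm And.right⟩
  · rw [sum_cost, card_insert_nb]
    simp only [badAt, rest] at hle
    push_cast
    linarith

/-- By `Crit.no_hanging`, an exceptional component is attached to at least two neighbours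
of `v`. -/
lemma Crit.two_links {S : Finset V} (h : Crit G S) {v : V} {C : Finset V}
    (hC : C ∈ badAt G S v) {x : V} (hx : x ∈ nb G S v) :
    ∃ x' ∈ nb G S v, x' ≠ x ∧ Linked G {x'} C := by
  by_contra! hn
  rw [mem_badAt] at hC
  obtain ⟨hC, hb⟩ := hC
  refine h.no_hanging (mem_nb.1 hx).1 (B := C) ⟨⟨?_, ?_⟩, hC.2⟩ hb
  · intro a ha
    have := mem_rest.1 (hC.1.1 ha)
    rw [mem_nb] at hx
    rw [mem_sdiff, mem_singleton]
    exact ⟨this.1, fun e => this.2.2 (e ▸ hx.2)⟩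
  · intro a ha b hb hab
    have har := mem_rest.1 (hC.1.1 ha)
    rw [mem_sdiff, mem_singleton] at hb
    by_cases hbr : b ∈ rest G S v
    · exact hC.1.2 a ha b hbr hab
    · exfalso
      rw [mem_rest] at hbr
      by_cases hbv : b = v
      · subst hbv; exact har.2.2 hab.symm
      · refine hn b (mem_nb.2 ⟨hb.1, ?_⟩) hb.2 (linked_singleton.2 ⟨a, ha, hab.symm⟩)
        by_contra hvb
        exact hbr ⟨hb.1, hbv, hvb⟩

/-- A neighbour `x` of `v` is attached to at most two exceptional components. Otherwise choose `x`
and delete it together with one of its neighbours from each of them, at least four vertices in all.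
An exceptional component `C` of the remainder not adjacent to `x` avoids `v` and its neighbours, so
it lies in a component `H` of `rest G S v`; it is not a piece of one of the damaged components for
reasons of order, and if `H` is undamaged then `C = H` is joined to `v` through a neighbour
other than `x`. -/
lemma Crit.links_le_two {S : Finset V} (h : Crit G S) {v : V} (hv : v ∈ S)
    {x : V} (hx : x ∈ nb G S v) : #((badAt G S v).filter (Linked G {x})) ≤ 2 := by
  by_contra! hk
  have hx' := mem_nb.1 hx
  set F := (badAt G S v).filter (Linked G {x}) with hF
  have hch : ∀ C ∈ F, ∃ y ∈ C, G.Adj x y := fun C hC => linked_singleton.1 (mem_filter.1 hC).2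
  have : Nonempty V := ⟨v⟩
  choose! y hyC hxy using hch
  have hcomp : ∀ C ∈ F, IsComp G (rest G S v) C ∧ Bad G C := fun C hC =>
    mem_badAt.1 (mem_filter.1 hC).1
  have hyr : ∀ C ∈ F, y C ∈ rest G S v := fun C hC => (hcomp C hC).1.1.1 (hyC C hC)
  have hinj : Set.InjOn y F := by
    intro C hC K hK e
    exact comp_unique (hcomp C hC).1 (hcomp K hK).1 (hyC C hC) (e ▸ hyC K hK)
  have hxim : x ∉ F.image y := by
    rw [mem_image]
    rintro ⟨C, hC, rfl⟩
    exact (mem_rest.1 (hyr C hC)).2.2 hx'.2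
  have hYS : insert x (F.image y) ⊆ S := by
    refine insert_subset hx'.1 ?_
    intro z hz
    obtain ⟨C, hC, rfl⟩ := mem_image.1 hz
    exact (mem_rest.1 (hyr C hC)).1
  have hmemY : ∀ z, z ∈ S \ insert x (F.image y) ↔ z ∈ S ∧ z ≠ x ∧ ∀ C ∈ F, y C ≠ z := by
    intro z
    simp only [mem_sdiff, mem_insert, mem_image, not_or, not_exists, not_and]
  refine h.glue_linked (D₀ := {x}) hYS (by simp) (protect_of_dom ?_) ?_ ?_
  · intro z hz
    rw [mem_insert, mem_image] at hz
    refine ⟨x, by simp, ?_⟩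
    rcases hz with rfl | ⟨C, hC, rfl⟩
    · exact Or.inl rfl
    · exact Or.inr (hxy C hC)
  · intro C hC hb
    by_contra hnl
    have hvY : v ∈ S \ insert x (F.image y) := by
      rw [hmemY]
      refine ⟨hv, hx'.2.ne, fun C hC e => ?_⟩
      exact (mem_rest.1 (hyr C hC)).2.1 e
    have hvC : v ∉ C := fun hvC => hnl (linked_singleton.2 ⟨v, hvC, hx'.2.symm⟩)
    have hnC : ∀ z ∈ C, ¬ G.Adj v z := fun z hz hvz => hvC (hC.1.2 z hz v hvY hvz.symm)
    have hCr : C ⊆ rest G S v := fun z hz => mem_rest.2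
      ⟨((hmemY z).1 (hC.1.1 hz)).1, fun e => hvC (e ▸ hz), hnC z hz⟩
    obtain ⟨c, hc⟩ := hC.2.1
    obtain ⟨H, hH, hcH⟩ := exists_comp (G := G) (hCr hc)
    have hCH : C ⊆ H := subset_comp hH hC.2 hCr hc hcH
    by_cases hHF : H ∈ F
    · have hlt : C ⊆ H.erase (y H) := fun z hz => mem_erase.2
        ⟨fun e => ((hmemY z).1 (hC.1.1 hz)).2.2 H hHF e.symm, hCH hz⟩
      have hcl := card_le_card hlt
      rw [card_erase_of_mem (hyC H hHF)] at hcl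
      have hbH := (hcomp H hHF).2
      have hbc := hb.card
      rcases hbH with h3 | hx6
      · omega
      · have h6 := hx6.card
        obtain ⟨f, hf, hf0⟩ := hx6.based (hyC H hHF)
        have hsub : H.erase (y H) ⊆ C := by
          refine subset_comp hC (hf0 ▸ hf.conn_erase) ?_ (hlt hc) hc
          intro z hz
          rw [mem_erase] at hz
          have hzr := mem_rest.1 (hH.1.1 hz.2)
          refine (hmemY z).2 ⟨hzr.1, fun e => hzr.2.2 (e ▸ hx'.2), fun K hK e => ?_⟩
          have hKH : K = H := comp_unique (hcomp K hK).1 hH (e ▸ hyC K hK) hz.2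
          exact hz.1 (by rw [← e, hKH])
        have := card_le_card hsub
        rw [card_erase_of_mem (hyC H hHF)] at this
        omega
    · have hHY : H ⊆ S \ insert x (F.image y) := by
        intro z hz
        have hzr := mem_rest.1 (hH.1.1 hz)
        refine (hmemY z).2 ⟨hzr.1, fun e => hzr.2.2 (e ▸ hx'.2), fun K hK e => ?_⟩
        have hKH : K = H := comp_unique (hcomp K hK).1 hH (e ▸ hyC K hK) hz
        exact hHF (hKH ▸ hK)
      have hCeq : C = H := hCH.antisymm (subset_comp hC hH.2 hHY hcH hc)
      subst hCeq
      obtain ⟨x', hx'', hne, hl⟩ := h.two_links (mem_badAt.2 ⟨hH, hb⟩) hx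
      obtain ⟨z, hz, hxz⟩ := linked_singleton.1 hl
      rw [mem_nb] at hx''
      refine hnC x' (hC.1.2 z hz x' ((hmemY _).2 ⟨hx''.1, hne, fun K hK e => ?_⟩) hxz.symm) hx''.2
      exact (mem_rest.1 (hyr K hK)).2.2 (e ▸ hx''.2)
  · rw [card_insert_of_notMem hxim, card_image_of_injOn hinj]
    simp only [card_singleton]
    omega

lemma card_links (S : Finset V) (v : V) {k : ℕ} (h : Crit G S) (hd : 3 ≤ #(nb G S v))
    (hk : ∀ x ∈ nb G S v, #((badAt G S v).filter (Linked G {x})) ≤ k) :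
    #(badAt G S v) * 2 ≤ #(nb G S v) * k := by
  refine card_mul_le_card_mul (fun C x => Linked G {x} C) ?_ hk
  intro C hC
  obtain ⟨x, hx⟩ := card_pos.1 (show 0 < #(nb G S v) by omega)
  obtain ⟨x₁, h1, -, hl1⟩ := h.two_links hC hx
  obtain ⟨x₂, h2, hne, hl2⟩ := h.two_links hC h1
  refine (card_le_card (s := {x₁, x₂}) ?_).trans' (card_pair hne.symm).ge
  intro z hz
  rw [mem_insert, mem_singleton] at hz
  rw [bipartiteAbove, mem_filter]
  rcases hz with rfl | rfl
  · exact ⟨h1, hl1⟩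
  · exact ⟨h2, hl2⟩

/-- In fact each vertex `x` is attached to at most one exceptional component: otherwise
choosing both `v` and `x` is efficient. -/
lemma Crit.links_le_one {S : Finset V} (h : Crit G S) {v : V} (hv : v ∈ S)
    (hd : 3 ≤ #(nb G S v)) (x : V) :
    #((badAt G S v).filter (Linked G {x})) ≤ 1 := by
  by_contra! hk
  have h1 := h.glue_nb hv (D₀ := {v, x}) (by simp)
  have h2 : #({v, x} : Finset V) ≤ 2 := card_le_two
  have h3 : #((badAt G S v).filter (Linked G {x})) ≤
      #((badAt G S v).filter (Linked G {v, x})) := by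
    refine card_le_card (monotone_filter_right _ ?_)
    rintro C - ⟨u, hu, hC⟩
    exact ⟨u, by simp only [mem_singleton] at hu; simp [hu], hC⟩
  have h4 : ∑ C ∈ badAt G S v, exc G C ≤ #(badAt G S v) • 2 :=
    sum_le_card_nsmul _ _ _ fun C _ => exc_le C
  have h5 := card_links S v h hd fun x hx => h.links_le_two hv hx
  rw [nsmul_eq_mul] at h4
  omega

/-- Around a vertex of degree `d ≥ 3` the counts are tight: exactly `d - 2` exceptional components
remain, and all of them are six-cycles. -/
lemma Crit.tight {S : Finset V} (h : Crit G S) {v : V} (hv : v ∈ S) (hd : 3 ≤ #(nb G S v)) :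
    #(badAt G S v) + 2 = #(nb G S v) ∧ ∀ C ∈ badAt G S v, Hex G C := by
  have h1 := h.glue_nb hv (D₀ := {v}) (by simp)
  have h4 : ∑ C ∈ badAt G S v, exc G C ≤ #(badAt G S v) • 2 :=
    sum_le_card_nsmul _ _ _ fun C _ => exc_le C
  have h5 := card_links S v h hd fun x _ => h.links_le_one hv hd x
  have h6 : (badAt G S v).filter (Linked G {v}) = ∅ := by
    rw [filter_eq_empty_iff]
    intro C hC hl
    obtain ⟨z, hz, hvz⟩ := linked_singleton.1 hl
    exact (mem_rest.1 ((mem_badAt.1 hC).1.1.1 hz)).2.2 hvz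
  simp only [h6, card_empty, card_singleton, nsmul_eq_mul] at h1 h4
  push_cast at h1
  refine ⟨by omega, fun C hC => ?_⟩
  by_contra hx
  have h7 : ∑ C ∈ badAt G S v, exc G C < ∑ C ∈ badAt G S v, 2 := by
    refine sum_lt_sum (fun C _ => exc_le C) ⟨C, hC, ?_⟩
    unfold exc
    split_ifs <;> simp
  rw [sum_const, nsmul_eq_mul] at h7
  omega

lemma Crit.link_unique {S : Finset V} (h : Crit G S) {v : V} (hv : v ∈ S)
    (hd : 3 ≤ #(nb G S v)) {x : V} {C K : Finset V}
    (hC : C ∈ badAt G S v) (hK : K ∈ badAt G S v) (hlC : Linked G {x} C) (hlK : Linked G {x} K) :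
    C = K :=
  card_le_one.1 (h.links_le_one hv hd x) C (mem_filter.2 ⟨hC, hlC⟩) K (mem_filter.2 ⟨hK, hlK⟩)

/-! ### Vertices of degree at least three -/

lemma three_le_nb {S : Finset V} {v a b c : V} (ha : a ∈ nb G S v) (hb : b ∈ nb G S v)
    (hc : c ∈ nb G S v) (hab : a ≠ b) (hac : a ≠ c) (hbc : b ≠ c) : 3 ≤ #(nb G S v) := by
  rw [← card_eq_three.2 ⟨a, b, c, hab, hac, hbc, rfl⟩]
  refine card_le_card ?_
  intro z hz
  simp only [mem_insert, mem_singleton] at hz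
  rcases hz with rfl | rfl | rfl <;> assumption

lemma HexBy.mem {C : Finset V} {f : Fin 6 → V} (h : HexBy G C f) (i : Fin 6) : f i ∈ C :=
  (h.2.1 _).2 ⟨i, rfl⟩

/-- A neighbour in `S` of an exceptional component of `rest G S v` outside that component is a
neighbour of `v`. -/
lemma nb_of_adj_badAt {S H : Finset V} {v a b : V} (hH : H ∈ badAt G S v) (ha : a ∈ H)
    (hb : b ∈ S) (hab : G.Adj a b) : b ∈ H ∨ b ∈ nb G S v := by
  rw [mem_badAt] at hH
  by_cases hvb : G.Adj v b
  · exact Or.inr (mem_nb.2 ⟨hb, hvb⟩)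
  · refine Or.inl (hH.1.1.2 a ha b (mem_rest.2 ⟨hb, ?_, hvb⟩) hab)
    rintro rfl
    exact (mem_rest.1 (hH.1.1.1 ha)).2.2 hab.symm

/-- Let `H` be a six-cycle left over at `v`, with a vertex `f 0` of degree at least three. Then every
exceptional component left over at `f 0` contains `v`: one avoiding `v` would be left over at `v`
as well, differ from `H`, and share with `H` a neighbour of `v` to which both are attached. -/
lemma Crit.mem_of_badAt {S : Finset V} (h : Crit G S) {v : V} (hv : v ∈ S)
    (hd : 3 ≤ #(nb G S v)) {H : Finset V} (hH : H ∈ badAt G S v) {f : Fin 6 → V}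
    (hf : HexBy G H f) {x : V} (hx : x ∈ nb G S v)
    (hd0 : 3 ≤ #(nb G S (f 0))) {K : Finset V} (hK : K ∈ badAt G S (f 0)) : v ∈ K := by
  by_contra hvK
  have hH' := mem_badAt.1 hH
  have hK' := mem_badAt.1 hK
  have hr : ∀ i, f i ∈ rest G S v := fun i => hH'.1.1.1 (hf.mem i)
  have hv0 : v ∈ rest G S (f 0) := by
    have := mem_rest.1 (hr 0)
    exact mem_rest.2 ⟨hv, this.2.1.symm, fun e => this.2.2 e.symm⟩
  have hKv : ∀ z ∈ K, ¬ G.Adj v z := fun z hz hvz => hvK (hK'.1.1.2 z hz v hv0 hvz.symm)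
  have hKr : K ⊆ rest G S v := fun z hz => mem_rest.2
    ⟨(mem_rest.1 (hK'.1.1.1 hz)).1, fun e => hvK (e ▸ hz), hKv z hz⟩
  obtain ⟨c, hc⟩ := hK'.1.2.1
  obtain ⟨H', hH'c, hcH'⟩ := exists_comp (G := G) (hKr hc)
  have hKH' : K ⊆ H' := subset_comp hH'c hK'.1.2 hKr hc hcH'
  have hK6 := ((h.tight ((mem_rest.1 (hr 0)).1) hd0).2 K hK).card
  by_cases hHH : H' = H
  · subst hHH
    have h0K : f 0 ∉ K := fun e => (mem_rest.1 (hK'.1.1.1 e)).2.1 rfl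
    have : K ⊆ H'.erase (f 0) := fun z hz => mem_erase.2 ⟨fun e => h0K (e ▸ hz), hKH' hz⟩
    have := card_le_card this
    rw [card_erase_of_mem (hf.mem 0), hf.card] at this
    omega
  · have hsub : H' ⊆ rest G S (f 0) := by
      intro z hz
      have hzr := hH'c.1.1 hz
      refine mem_rest.2 ⟨(mem_rest.1 hzr).1, ?_, ?_⟩
      · rintro rfl
        exact hHH (comp_unique hH'c hH'.1 hz (hf.mem 0))
      · intro e
        exact hHH (comp_unique hH'c hH'.1 hz (hH'.1.1.2 _ (hf.mem 0) z hzr e))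
    have hKeq : K = H' := hKH'.antisymm (subset_comp hK'.1 hH'c.2 hsub hcH' hc)
    subst hKeq
    have hKb : K ∈ badAt G S v := mem_badAt.2 ⟨hH'c, hK'.2⟩
    obtain ⟨x', hx', -, hl⟩ := h.two_links hKb hx
    obtain ⟨z, hz, hxz⟩ := linked_singleton.1 hl
    rw [mem_nb] at hx'
    have hx0 : G.Adj x' (f 0) := by
      by_contra hn
      refine hKv x' (hK'.1.1.2 z hz x' (mem_rest.2 ⟨hx'.1, ?_, fun e => hn e.symm⟩) hxz.symm) hx'.2
      rintro rfl
      exact (mem_rest.1 (hr 0)).2.2 hx'.2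
    exact hHH (h.link_unique hv hd hKb hH hl (linked_singleton.2 ⟨_, hf.mem 0, hx0⟩))

/-- A vertex `f 0` of a six-cycle left over at `v` that is adjacent to a neighbour of `v` has degree
exactly three: by `Crit.mem_of_badAt` only one exceptional component is left over at `f 0`, while
`Crit.tight` asks for two less than the degree. -/
lemma Crit.degrees {S : Finset V} (h : Crit G S) {v : V} (hv : v ∈ S)
    (hd : 3 ≤ #(nb G S v)) {H : Finset V} (hH : H ∈ badAt G S v) {f : Fin 6 → V}
    (hf : HexBy G H f) {x : V} (hx : x ∈ nb G S v) (hx0 : G.Adj x (f 0)) :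
    ∃ K ∈ badAt G S (f 0), v ∈ K ∧ nb G S (f 0) = {f 1, f 5, x} := by
  have hH' := mem_badAt.1 hH
  have hr : ∀ i, f i ∈ rest G S v := fun i => hH'.1.1.1 (hf.mem i)
  have hS : ∀ i, f i ∈ S := fun i => (mem_rest.1 (hr i)).1
  have hxf : ∀ i, f i ≠ x := by
    rintro i rfl
    exact (mem_rest.1 (hr i)).2.2 (mem_nb.1 hx).2
  have h1 : f 1 ∈ nb G S (f 0) := mem_nb.2 ⟨hS 1, (hf.2.2 _ _).2 (by decide)⟩
  have h5 : f 5 ∈ nb G S (f 0) := mem_nb.2 ⟨hS 5, (hf.2.2 _ _).2 (by decide)⟩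
  have hx' : x ∈ nb G S (f 0) := mem_nb.2 ⟨(mem_nb.1 hx).1, hx0.symm⟩
  have h15 : f 1 ≠ f 5 := fun e => absurd (hf.1 e) (by decide)
  have hd0 := three_le_nb h1 h5 hx' h15 (hxf 1) (hxf 5)
  have ht := h.tight (hS 0) hd0
  have hall := fun K hK => h.mem_of_badAt hv hd hH hf hx hd0 (K := K) hK
  have hle : #(badAt G S (f 0)) ≤ 1 := card_le_one.2 fun K hK K' hK' =>
    comp_unique (mem_badAt.1 hK).1 (mem_badAt.1 hK').1 (hall K hK) (hall K' hK')
  obtain ⟨K, hK⟩ := card_pos.1 (show 0 < #(badAt G S (f 0)) by omega)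
  refine ⟨K, hK, hall K hK, (eq_of_subset_of_card_le ?_ ?_).symm⟩
  · intro z hz
    simp only [mem_insert, mem_singleton] at hz
    rcases hz with rfl | rfl | rfl <;> assumption
  · rw [card_eq_three.2 ⟨_, _, _, h15, hxf 1, hxf 5, rfl⟩]
    omega

/-- Every vertex of degree at least three comes with a six-cycle through a vertex `f 0` at
distance two. -/
lemma Crit.exists_hex {S : Finset V} (h : Crit G S) {v : V} (hv : v ∈ S)
    (hd : 3 ≤ #(nb G S v)) : ∃ H ∈ badAt G S v, ∃ f, HexBy G H f ∧
      ∃ x ∈ nb G S v, G.Adj x (f 0) := by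
  have ht := h.tight hv hd
  obtain ⟨H, hH⟩ := card_pos.1 (show 0 < #(badAt G S v) by omega)
  obtain ⟨y, hy⟩ := card_pos.1 (show 0 < #(nb G S v) by omega)
  obtain ⟨x, hx, -, hl⟩ := h.two_links hH hy
  obtain ⟨z, hz, hxz⟩ := linked_singleton.1 hl
  obtain ⟨f, hf, rfl⟩ := (ht.2 H hH).based hz
  exact ⟨H, hH, f, hf, x, hx, hxz⟩

lemma HexBy.nb_zero {K : Finset V} {g : Fin 6 → V} (hg : HexBy G K g) {z : V} (hz : z ∈ K)
    (h : G.Adj (g 0) z) : z = g 1 ∨ z = g 5 := by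
  obtain ⟨i, rfl⟩ := (hg.2.1 z).1 hz
  rw [hg.2.2] at h
  have : ∀ i : Fin 6, (i = 0 + 1 ∨ 0 = i + 1) → i = 1 ∨ i = 5 := by decide
  exact (this i h).imp (congrArg g) (congrArg g)

/-- The local structure at a vertex `v` of degree at least three: a six-cycle `f`, left over at
`v`, such that `v` is joined to `f 0`, `f 2`, `f 4` by the paths through its three
neighbours `x`, `x'`, `x''`, and `x'`, `x''` have no neighbours outside this configuration. -/
lemma Crit.config {S : Finset V} (h : Crit G S) {v : V} (hv : v ∈ S)
    (hd : 3 ≤ #(nb G S v)) : ∃ H ∈ badAt G S v, ∃ f, HexBy G H f ∧ ∃ x x' x'',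
      nb G S v = {x, x', x''} ∧ x ≠ x' ∧ x ≠ x'' ∧ x' ≠ x'' ∧ ¬ G.Adj x' x'' ∧
      G.Adj x (f 0) ∧ G.Adj x' (f 2) ∧ G.Adj x'' (f 4) ∧
      ∀ a, a = x' ∨ a = x'' → ∀ z ∈ S, G.Adj a z → z = v ∨ z = x ∨ z ∈ H := by
  obtain ⟨H, hH, f, hf, x, hx, hx0⟩ := h.exists_hex hv hd
  obtain ⟨K, hK, hvK, hnb0⟩ := h.degrees hv hd hH hf hx hx0
  have hH' := mem_badAt.1 hH
  have hK' := mem_badAt.1 hK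
  have hr : ∀ i, f i ∈ rest G S v := fun i => hH'.1.1.1 (hf.mem i)
  have hS : ∀ i, f i ∈ S := fun i => (mem_rest.1 (hr i)).1
  have hvf : ∀ i, f i ∉ nb G S v := fun i e => (mem_rest.1 (hr i)).2.2 (mem_nb.1 e).2
  have hd0 : 3 ≤ #(nb G S (f 0)) := by
    have := (h.tight hv hd).1
    by_contra! hlt
    have h1 : #(nb G S (f 0)) = 3 := by
      rw [hnb0]
      refine card_eq_three.2 ⟨_, _, _, fun e => absurd (hf.1 e) (by decide), ?_, ?_, rfl⟩
      · exact fun e => hvf 1 (e ▸ hx)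
      · exact fun e => hvf 5 (e ▸ hx)
    omega
  have ht := (h.tight (hS 0) hd0).2
  obtain ⟨g, hg, hg0⟩ := (ht K hK).based hvK
  -- `K` contains all neighbours of `v` other than `x`.
  have hK0 : ∀ z ∈ K, z ≠ f 0 ∧ z ≠ f 1 ∧ z ≠ f 5 ∧ z ≠ x := by
    intro z hz
    have hzr := mem_rest.1 (hK'.1.1.1 hz)
    have hn : z ∉ nb G S (f 0) := fun e => hzr.2.2 (mem_nb.1 e).2
    rw [hnb0] at hn
    simp only [mem_insert, mem_singleton, not_or] at hn
    exact ⟨hzr.2.1, hn⟩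
  have hrest0 : ∀ z ∈ S, z ≠ f 0 → z ≠ f 1 → z ≠ f 5 → z ≠ x → z ∈ rest G S (f 0) := by
    intro z hz h0 h1 h5 hx
    refine mem_rest.2 ⟨hz, h0, fun e => ?_⟩
    have : z ∈ nb G S (f 0) := mem_nb.2 ⟨hz, e⟩
    rw [hnb0] at this
    simp only [mem_insert, mem_singleton] at this
    tauto
  have hnbK : ∀ z ∈ nb G S v, z ≠ x → z ∈ K := by
    intro z hz hzx
    refine hK'.1.1.2 v hvK z (hrest0 z (mem_nb.1 hz).1 ?_ ?_ ?_ hzx) (mem_nb.1 hz).2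
    all_goals rintro rfl; exact hvf _ hz
  have hg15 : ∀ z ∈ nb G S v, z = x ∨ z = g 1 ∨ z = g 5 := by
    intro z hz
    by_cases hzx : z = x
    · exact Or.inl hzx
    · exact Or.inr (hg.nb_zero (hnbK z hz hzx) (hg0 ▸ (mem_nb.1 hz).2))
  have hKS : ∀ z ∈ K, z ∈ S := fun z hz => (mem_rest.1 (hK'.1.1.1 hz)).1
  have hn1 : g 1 ∈ nb G S v :=
    mem_nb.2 ⟨hKS _ (hg.mem 1), hg0 ▸ (hg.2.2 _ _).2 (by decide)⟩
  have hn5 : g 5 ∈ nb G S v :=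
    mem_nb.2 ⟨hKS _ (hg.mem 5), hg0 ▸ (hg.2.2 _ _).2 (by decide)⟩
  have hnbv : nb G S v = {x, g 1, g 5} := by
    ext z
    simp only [mem_insert, mem_singleton]
    refine ⟨hg15 z, ?_⟩
    rintro (rfl | rfl | rfl) <;> assumption
  -- `f 2`, `f 3`, `f 4` belong to `K`, since no component of order three is left over at `f 0`.
  have hfne : ∀ i j, i ≠ j → f i ≠ f j := fun i j hij e => hij (hf.1 e)
  have hfr : ∀ i, i ≠ 0 → i ≠ 1 → i ≠ 5 → f i ∈ rest G S (f 0) := fun i h0 h1 h5 =>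
    hrest0 _ (hS i) (hfne _ _ h0) (hfne _ _ h1) (hfne _ _ h5) (fun e => hvf i (e ▸ hx))
  have hf2r := hfr 2 (by decide) (by decide) (by decide)
  have hf3r := hfr 3 (by decide) (by decide) (by decide)
  have hf4r := hfr 4 (by decide) (by decide) (by decide)
  obtain ⟨C, hC, h2C⟩ := exists_comp (G := G) hf2r
  have h3C : f 3 ∈ C := hC.1.2 _ h2C _ hf3r ((hf.2.2 _ _).2 (by decide))
  have h4C : f 4 ∈ C := hC.1.2 _ h3C _ hf4r ((hf.2.2 _ _).2 (by decide))
  have hCK : C = K := by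
    by_contra hne
    have hdis : ∀ z ∈ C, z ∉ K := fun z hz hzK => hne (comp_unique hC hK'.1 hz hzK)
    have hT : Closed G C {f 2, f 3, f 4} := by
      refine ⟨?_, ?_⟩
      · intro z hz
        simp only [mem_insert, mem_singleton] at hz
        rcases hz with rfl | rfl | rfl <;> assumption
      · intro a ha b hb hab
        have haH : a ∈ H := by
          simp only [mem_insert, mem_singleton] at ha
          rcases ha with rfl | rfl | rfl <;> exact hf.mem _
        have hbr := hC.1.1 hb
        have hbS := (mem_rest.1 hbr).1
        have hb0 : b ∉ nb G S (f 0) := fun e => (mem_rest.1 hbr).2.2 (mem_nb.1 e).2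
        rw [hnb0] at hb0
        simp only [mem_insert, mem_singleton, not_or] at hb0
        rcases nb_of_adj_badAt hH haH hbS hab with hbH | hbn
        · obtain ⟨i, rfl⟩ := (hf.2.1 b).1 hbH
          have h0 : i ≠ 0 := by rintro rfl; exact (mem_rest.1 hbr).2.1 rfl
          have h1 : i ≠ 1 := by rintro rfl; exact hb0.1 rfl
          have h5 : i ≠ 5 := by rintro rfl; exact hb0.2.1 rfl
          have : ∀ i : Fin 6, i ≠ 0 → i ≠ 1 → i ≠ 5 → i = 2 ∨ i = 3 ∨ i = 4 := by decide
          rcases this i h0 h1 h5 with rfl | rfl | rfl <;> simp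
        · exact absurd (hnbK b hbn hb0.2.2) (hdis b hb)
    have hCeq := hC.2.2 _ hT ⟨f 2, by simp⟩
    have hC3 : #C = 3 := by
      rw [← hCeq]
      exact card_eq_three.2 ⟨_, _, _, hfne _ _ (by decide), hfne _ _ (by decide),
        hfne _ _ (by decide), rfl⟩
    have := (ht C (mem_badAt.2 ⟨hC, Or.inl hC3⟩)).card
    omega
  subst hCK
  -- Hence `f 2, f 3, f 4` are `g 2, g 3, g 4` in this or the reverse order.
  have hidx : ∀ i, f i ∈ C → ∃ j, g j = f i ∧ j ≠ 0 ∧ j ≠ 1 ∧ j ≠ 5 := by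
    intro i hi
    obtain ⟨j, hj⟩ := (hg.2.1 _).1 hi
    refine ⟨j, hj, ?_, ?_, ?_⟩
    · rintro rfl
      exact (mem_rest.1 (hr i)).2.1 (hj.symm.trans hg0)
    · rintro rfl; exact hvf i (hj ▸ hn1)
    · rintro rfl; exact hvf i (hj ▸ hn5)
  obtain ⟨j2, hj2, h20, h21, h25⟩ := hidx 2 h2C
  obtain ⟨j3, hj3, h30, h31, h35⟩ := hidx 3 h3C
  obtain ⟨j4, hj4, h40, h41, h45⟩ := hidx 4 h4C
  have a23 : j3 = j2 + 1 ∨ j2 = j3 + 1 := by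
    rw [← hg.2.2, hj2, hj3, hf.2.2]; decide
  have a34 : j4 = j3 + 1 ∨ j3 = j4 + 1 := by
    rw [← hg.2.2, hj3, hj4, hf.2.2]; decide
  have n24 : j2 ≠ j4 := by
    rintro rfl; exact absurd (hf.1 (hj2.symm.trans hj4)) (by decide)
  have hcase : ∀ j2 j3 j4 : Fin 6, j2 ≠ 0 → j2 ≠ 1 → j2 ≠ 5 → j3 ≠ 0 → j3 ≠ 1 → j3 ≠ 5 →
      j4 ≠ 0 → j4 ≠ 1 → j4 ≠ 5 → (j3 = j2 + 1 ∨ j2 = j3 + 1) → (j4 = j3 + 1 ∨ j3 = j4 + 1) →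
      j2 ≠ j4 → (j2 = 2 ∧ j4 = 4) ∨ (j2 = 4 ∧ j4 = 2) := by
    have hi : ∀ i : Fin 6, i ≠ 0 → i ≠ 1 → i ≠ 5 → i = 2 ∨ i = 3 ∨ i = 4 := by decide
    intro a b c a0 a1 a5 b0 b1 b5 c0 c1 c5
    rcases hi a a0 a1 a5 with rfl | rfl | rfl <;> rcases hi b b0 b1 b5 with rfl | rfl | rfl <;>
      rcases hi c c0 c1 c5 with rfl | rfl | rfl <;> decide
  have hx1 : x ≠ g 1 := (hK0 _ (hg.mem 1)).2.2.2.symm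
  have hx5 : x ≠ g 5 := (hK0 _ (hg.mem 5)).2.2.2.symm
  have h15 : g 1 ≠ g 5 := fun e => absurd (hg.1 e) (by decide)
  have hn15 : ¬ G.Adj (g 1) (g 5) := by rw [hg.2.2]; decide
  have h12 : G.Adj (g 1) (g 2) := (hg.2.2 _ _).2 (by decide)
  have h54 : G.Adj (g 5) (g 4) := (hg.2.2 _ _).2 (by decide)
  -- A neighbour of `g 1` or `g 5` lies on `g`, or in the closed neighbourhood of `f 0`.
  have hout : ∀ i, i = 1 ∨ i = 5 → ∀ z ∈ S, G.Adj (g i) z → z = v ∨ z = x ∨ z ∈ H := by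
    intro i hi z hz hgz
    by_cases h0 : z = f 0
    · exact Or.inr (Or.inr (h0 ▸ hf.mem 0))
    by_cases h1 : z = f 1
    · exact Or.inr (Or.inr (h1 ▸ hf.mem 1))
    by_cases h5 : z = f 5
    · exact Or.inr (Or.inr (h5 ▸ hf.mem 5))
    by_cases hxz : z = x
    · exact Or.inr (Or.inl hxz)
    have hzC := hC.1.2 _ (hg.mem i) z (hrest0 z hz h0 h1 h5 hxz) hgz
    obtain ⟨k, rfl⟩ := (hg.2.1 z).1 hzC
    rw [hg.2.2] at hgz
    have hk : ∀ i k : Fin 6, (i = 1 ∨ i = 5) → (k = i + 1 ∨ i = k + 1) →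
      k = 0 ∨ k = 2 ∨ k = 4 := by decide
    rcases hcase j2 j3 j4 h20 h21 h25 h30 h31 h35 h40 h41 h45 a23 a34 n24 with
      ⟨rfl, rfl⟩ | ⟨rfl, rfl⟩ <;> rcases hk i k hi hgz with rfl | rfl | rfl
    · exact Or.inl hg0
    · exact Or.inr (Or.inr (hj2 ▸ hf.mem 2))
    · exact Or.inr (Or.inr (hj4 ▸ hf.mem 4))
    · exact Or.inl hg0
    · exact Or.inr (Or.inr (hj4 ▸ hf.mem 4))
    · exact Or.inr (Or.inr (hj2 ▸ hf.mem 2))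
  rcases hcase j2 j3 j4 h20 h21 h25 h30 h31 h35 h40 h41 h45 a23 a34 n24 with
    ⟨rfl, rfl⟩ | ⟨rfl, rfl⟩
  · refine ⟨H, hH, f, hf, x, g 1, g 5, hnbv, hx1, hx5, h15, hn15, hx0, hj2 ▸ h12, hj4 ▸ h54, ?_⟩
    rintro a (rfl | rfl)
    · exact hout 1 (by simp)
    · exact hout 5 (by simp)
  · refine ⟨H, hH, f, hf, x, g 5, g 1, ?_, hx5, hx1, h15.symm, fun e => hn15 e.symm, hx0,
      hj2 ▸ h54, hj4 ▸ h12, ?_⟩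
    · rw [hnbv, pair_comm]
    rintro a (rfl | rfl)
    · exact hout 5 (by simp)
    · exact hout 1 (by simp)

/-- A vertex of degree at most three with two dominated neighbours is not the centre of an
undominated path. -/
lemma eq_of_deg {S D : Finset V} {a b c p q : V} (hdeg : #(nb G S b) ≤ 3)
    (ha : a ∈ nb G S b) (hc : c ∈ nb G S b) (hp : p ∈ nb G S b) (hq : q ∈ nb G S b)
    (na : ¬ Dom G D a) (nc : ¬ Dom G D c) (dp : Dom G D p) (dq : Dom G D q) (hpq : p ≠ q) :
    a = c := by
  by_contra hac
  have hcard : #({a, c, p, q} : Finset V) = 4 := by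
    have h1 : a ≠ p := by rintro rfl; exact na dp
    have h2 : a ≠ q := by rintro rfl; exact na dq
    have h3 : c ≠ p := by rintro rfl; exact nc dp
    have h4 : c ≠ q := by rintro rfl; exact nc dq
    rw [card_insert_of_notMem (by simp [hac, h1, h2]), card_insert_of_notMem (by simp [h3, h4]),
      card_pair hpq]
  have hsub : ({a, c, p, q} : Finset V) ⊆ nb G S b := by
    intro z hz
    simp only [mem_insert, mem_singleton] at hz
    rcases hz with rfl | rfl | rfl | rfl <;> assumption
  have := card_le_card hsub
  omega

/-- A minimal counterexample has maximum degree at most two: otherwise, in the notation of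
`Crit.config`, the pair `x`, `f 3` isolates the ten vertices described there. -/
lemma Crit.max_deg {S : Finset V} (h : Crit G S) {v : V} (hv : v ∈ S) :
    #(nb G S v) ≤ 2 := by
  by_contra! hd
  have hdeg3 : ∀ w ∈ S, #(nb G S w) ≤ 3 := by
    intro w hw
    by_contra! hlt
    obtain ⟨H, -, f, -, x, x', x'', hnb, -⟩ := h.config hw (by omega)
    have := card_le_three (a := x) (b := x') (c := x'')
    rw [← hnb] at this
    omega
  obtain ⟨H, hH, f, hf, x, x', x'', hnb, hxx', hxx'', hne12, hnadj, h0, h2, h4, hout⟩ :=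
    h.config hv hd
  have hH' := mem_badAt.1 hH
  have hr : ∀ i, f i ∈ rest G S v := fun i => hH'.1.1.1 (hf.mem i)
  have hS : ∀ i, f i ∈ S := fun i => (mem_rest.1 (hr i)).1
  have hvf : ∀ i, f i ∉ nb G S v := fun i e => (mem_rest.1 (hr i)).2.2 (mem_nb.1 e).2
  have hnx : x ∈ nb G S v := by simp [hnb]
  have hnx' : x' ∈ nb G S v := by simp [hnb]
  have hnx'' : x'' ∈ nb G S v := by simp [hnb]
  have hadj : ∀ i j, (j = i + 1 ∨ i = j + 1) → G.Adj (f i) (f j) := fun i j hij =>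
    (hf.2.2 i j).2 hij
  have dx : Dom G {x, f 3} x := ⟨x, by simp, Or.inl rfl⟩
  have dv : Dom G {x, f 3} v := ⟨x, by simp, Or.inr (mem_nb.1 hnx).2.symm⟩
  have d0 : Dom G {x, f 3} (f 0) := ⟨x, by simp, Or.inr h0⟩
  have d3 : Dom G {x, f 3} (f 3) := ⟨f 3, by simp, Or.inl rfl⟩
  have d2 : Dom G {x, f 3} (f 2) := ⟨f 3, by simp, Or.inr (hadj _ _ (by decide))⟩
  have d4 : Dom G {x, f 3} (f 4) := ⟨f 3, by simp, Or.inr (hadj _ _ (by decide))⟩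
  have hfne : ∀ i j, i ≠ j → f i ≠ f j := fun i j hij e => hij (hf.1 e)
  have hvne : ∀ i, v ≠ f i := fun i => (mem_rest.1 (hr i)).2.1.symm
  set W : Finset V := insert v (insert x (insert x' (insert x'' H))) with hW
  have hmW : ∀ z, z ∈ W ↔ z = v ∨ z = x ∨ z = x' ∨ z = x'' ∨ z ∈ H := by
    intro z; simp [hW]
  -- Only `x` has neighbours outside `W`.
  have hWcl : ∀ a ∈ W, a ≠ x → ∀ z ∈ S, G.Adj a z → z ∈ W := by
    intro a ha hax z hz haz
    have hnbW : z ∈ nb G S v → z ∈ W := by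
      intro hzn
      rw [hnb] at hzn
      simp only [mem_insert, mem_singleton] at hzn
      rw [hmW]
      tauto
    rcases (hmW a).1 ha with rfl | rfl | rfl | rfl | haH
    · exact hnbW (mem_nb.2 ⟨hz, haz⟩)
    · exact absurd rfl hax
    · rw [hmW]
      rcases hout a (Or.inl rfl) z hz haz with h | h | h <;> tauto
    · rw [hmW]
      rcases hout a (Or.inr rfl) z hz haz with h | h | h <;> tauto
    · rcases nb_of_adj_badAt hH haH hz haz with h | h
      · rw [hmW]; tauto
      · exact hnbW h
  -- The undominated vertices of `W` are among `x'`, `x''`, `f 1`, `f 5`.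
  have hcenter : ∀ a b c, a ∈ S → b ∈ W → c ∈ S → ¬ Dom G {x, f 3} a → ¬ Dom G {x, f 3} b →
      ¬ Dom G {x, f 3} c → G.Adj a b → G.Adj b c → a = c := by
    intro a b c ha hb hc na nb nc hab hbc
    rcases (hmW b).1 hb with rfl | rfl | rfl | rfl | hbH
    · exact absurd dv nb
    · exact absurd dx nb
    · have hbS := (mem_nb.1 hnx').1
      exact eq_of_deg (hdeg3 b hbS) (mem_nb.2 ⟨ha, hab.symm⟩) (mem_nb.2 ⟨hc, hbc⟩)
        (mem_nb.2 ⟨hv, (mem_nb.1 hnx').2.symm⟩) (mem_nb.2 ⟨hS 2, h2⟩) na nc dv d2 (hvne 2)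
    · have hbS := (mem_nb.1 hnx'').1
      exact eq_of_deg (hdeg3 b hbS) (mem_nb.2 ⟨ha, hab.symm⟩) (mem_nb.2 ⟨hc, hbc⟩)
        (mem_nb.2 ⟨hv, (mem_nb.1 hnx'').2.symm⟩) (mem_nb.2 ⟨hS 4, h4⟩) na nc dv d4 (hvne 4)
    · obtain ⟨i, rfl⟩ := (hf.2.1 b).1 hbH
      have hi : ∀ i : Fin 6, i = 0 ∨ i = 1 ∨ i = 2 ∨ i = 3 ∨ i = 4 ∨ i = 5 := by decide
      rcases hi i with rfl | rfl | rfl | rfl | rfl | rfl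
      · exact absurd d0 nb
      · exact eq_of_deg (hdeg3 _ (hS 1)) (mem_nb.2 ⟨ha, hab.symm⟩) (mem_nb.2 ⟨hc, hbc⟩)
          (mem_nb.2 ⟨hS 0, hadj _ _ (by decide)⟩) (mem_nb.2 ⟨hS 2, hadj _ _ (by decide)⟩)
          na nc d0 d2 (hfne _ _ (by decide))
      · exact absurd d2 nb
      · exact absurd d3 nb
      · exact absurd d4 nb
      · exact eq_of_deg (hdeg3 _ (hS 5)) (mem_nb.2 ⟨ha, hab.symm⟩) (mem_nb.2 ⟨hc, hbc⟩)
          (mem_nb.2 ⟨hS 0, hadj _ _ (by decide)⟩) (mem_nb.2 ⟨hS 4, hadj _ _ (by decide)⟩)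
          na nc d0 d4 (hfne _ _ (by decide))
  have hWS : W ⊆ S := by
    intro z hz
    rcases (hmW z).1 hz with rfl | rfl | rfl | rfl | hzH
    · exact hv
    · exact (mem_nb.1 hnx).1
    · exact (mem_nb.1 hnx').1
    · exact (mem_nb.1 hnx'').1
    · obtain ⟨i, rfl⟩ := (hf.2.1 z).1 hzH
      exact hS i
  have hvW : v ∈ W := by simp [hW]
  refine h.glue_linked (D₀ := {x, f 3}) (Y := W) hWS ⟨v, hvW⟩ ?_ ?_ ?_
  · intro a b c ha hb hc na nb nc hab hbc hac
    have hbW : b ∉ W := fun e => hac (hcenter a b c ha e hc na nb nc hab hbc)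
    refine ⟨fun e => hbW ?_, hbW, fun e => hbW ?_⟩
    · exact hWcl a e (by rintro rfl; exact na dx) b hb hab
    · exact hWcl c e (by rintro rfl; exact nc dx) b hb hbc.symm
  · intro C hC _
    obtain ⟨y, hy, c, hc, hyc⟩ := comp_adj h.conn ⟨v, hvW⟩ hWS hC
    refine ⟨x, by simp, c, hc, ?_⟩
    by_cases hyx : y = x
    · exact hyx ▸ hyc
    · have hcr := mem_sdiff.1 (hC.1.1 hc)
      exact absurd (hWcl y hy hyx c hcr.1 hyc) hcr.2
  · have h7 : insert v H ⊆ W := by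
      intro z hz
      rw [mem_insert] at hz
      rw [hmW]
      tauto
    have h8 := card_le_card h7
    rw [card_insert_of_notMem (fun e => (mem_rest.1 (hH'.1.1.1 e)).2.1 rfl), hf.card] at h8
    have h9 : #({x, f 3} : Finset V) ≤ 2 := card_le_two
    omega

/-! ### Maximum degree two -/

/-- `f` enumerates a path on `m` vertices in `S`; its values from `m` on are irrelevant. -/
def PathIn (G : SimpleGraph V) (S : Finset V) (m : ℕ) (f : ℕ → V) : Prop :=
  (∀ i < m, f i ∈ S) ∧ (∀ i < m, ∀ j < m, f i = f j → i = j) ∧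
    ∀ i, i + 1 < m → G.Adj (f i) (f (i + 1))

lemma PathIn.le_card {S : Finset V} {m : ℕ} {f : ℕ → V} (h : PathIn G S m f) : m ≤ #S := by
  have := card_le_card_of_injOn (s := range m) (t := S) f (fun i hi => h.1 i (by simpa using hi))
    (fun i hi j hj e => h.2.1 i (by simpa using hi) j (by simpa using hj) e)
  simpa using this

/-- A connected set of maximum degree at most two is spanned by a path, namely by a longest one. -/
lemma exists_spanning_path {S : Finset V} (hS : Conn G S) (hdeg : ∀ v ∈ S, #(nb G S v) ≤ 2) :
    ∃ f, PathIn G S #S f ∧ ∀ a ∈ S, ∃ i < #S, f i = a := by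
  obtain ⟨s, hs⟩ := hS.1
  have hP : ∃ f, PathIn G S 1 f :=
    ⟨fun _ => s, fun _ _ => hs, fun i hi j hj _ => by omega, fun i hi => by omega⟩
  set m := Nat.findGreatest (fun m => ∃ f, PathIn G S m f) #S with hm
  obtain ⟨f, hf⟩ : ∃ f, PathIn G S m f :=
    Nat.findGreatest_spec (P := fun m => ∃ f, PathIn G S m f) hP.choose_spec.le_card hP
  have hmax : ∀ k f, PathIn G S k f → k ≤ m := fun k f hk => Nat.le_findGreatest hk.le_card ⟨f, hk⟩
  have hm1 : 1 ≤ m := hmax 1 _ hP.choose_spec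
  have hcl : Closed G S ((range m).image f) := by
    refine ⟨?_, ?_⟩
    · intro z hz
      obtain ⟨i, hi, rfl⟩ := mem_image.1 hz
      exact hf.1 i (by simpa using hi)
    · intro a ha b hb hab
      obtain ⟨i, hi, rfl⟩ := mem_image.1 ha
      rw [mem_range] at hi
      by_contra hbn
      have hbf : ∀ j < m, f j ≠ b := fun j hj e => hbn (mem_image.2 ⟨j, by simpa using hj, e⟩)
      by_cases h0 : i = 0
      · subst h0
        have := hmax (m + 1) (fun j => if j = 0 then b else f (j - 1)) ⟨?_, ?_, ?_⟩
        · omega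
        · intro j hj
          dsimp only
          split_ifs
          · exact hb
          · exact hf.1 _ (by omega)
        · intro j hj k hk e
          dsimp only at e
          split_ifs at e with h1 h2 h2
          · omega
          · exact absurd e.symm (hbf _ (by omega))
          · exact absurd e (hbf _ (by omega))
          · have := hf.2.1 _ (by omega) _ (by omega) e
            omega
        · intro j hj
          by_cases h1 : j = 0
          · subst h1; simpa using hab.symm
          · have := hf.2.2 (j - 1) (by omega)
            rw [Nat.sub_add_cancel (by omega)] at this
            simpa [h1] using this
      · by_cases hl : i + 1 = m
        · have := hmax (m + 1) (fun j => if j = m then b else f j) ⟨?_, ?_, ?_⟩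
          · omega
          · intro j hj
            dsimp only
            split_ifs
            · exact hb
            · exact hf.1 _ (by omega)
          · intro j hj k hk e
            dsimp only at e
            split_ifs at e with h1 h2 h2
            · omega
            · exact absurd e.symm (hbf _ (by omega))
            · exact absurd e (hbf _ (by omega))
            · exact hf.2.1 _ (by omega) _ (by omega) e
          · intro j hj
            by_cases h1 : j + 1 = m
            · have hji : j = i := by omega
              subst hji
              have : j ≠ m := by omega
              simpa [h1, this] using hab
            · have h2 : j ≠ m := by omega
              simpa [h1, h2] using hf.2.2 j (by omega)
        · have h1 := hf.2.2 i (by omega)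
          have h2 := hf.2.2 (i - 1) (by omega)
          rw [Nat.sub_add_cancel (by omega)] at h2
          have := three_le_nb (mem_nb.2 ⟨hf.1 _ (by omega), h1⟩)
            (mem_nb.2 ⟨hf.1 _ (by omega), h2.symm⟩) (mem_nb.2 ⟨hb, hab⟩)
            (fun e => by have := hf.2.1 _ (by omega) _ (by omega) e; omega)
            (hbf _ (by omega)) (hbf _ (by omega))
          have := hdeg _ (hf.1 i hi)
          omega
  have himg := hS.2 _ hcl ⟨f 0, mem_image.2 ⟨0, mem_range.2 (by omega), rfl⟩⟩
  have hcard : m = #S := by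
    refine le_antisymm hf.le_card ?_
    conv_lhs => rw [← himg]
    simpa using card_image_le (s := range m) (f := f)
  refine ⟨f, hcard ▸ hf, fun a ha => ?_⟩
  rw [← himg, mem_image] at ha
  obtain ⟨i, hi, rfl⟩ := ha
  exact ⟨i, by rw [← hcard]; simpa using hi, rfl⟩

/-- The only edge off a spanning path of a graph of maximum degree two joins its ends. -/
lemma PathIn.adj {S : Finset V} {f : ℕ → V} {m : ℕ} (hf : PathIn G S m f)
    (hdeg : ∀ v ∈ S, #(nb G S v) ≤ 2) {i j : ℕ} (hij : i < j) (hj : j < m)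
    (h : G.Adj (f i) (f j)) : j = i + 1 ∨ (i = 0 ∧ j + 1 = m) := by
  have hne : ∀ a b, a < m → b < m → a ≠ b → f a ≠ f b := fun a b ha hb hab e =>
    hab (hf.2.1 a ha b hb e)
  by_contra! hn
  obtain ⟨h1, h2⟩ := hn
  by_cases h0 : i = 0
  · subst h0
    have a1 := hf.2.2 j (by have := h2 rfl; omega)
    have a2 := hf.2.2 (j - 1) (by omega)
    rw [Nat.sub_add_cancel (by omega)] at a2
    have := h2 rfl
    have := three_le_nb (mem_nb.2 ⟨hf.1 (j + 1) (by omega), a1⟩)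
      (mem_nb.2 ⟨hf.1 (j - 1) (by omega), a2.symm⟩) (mem_nb.2 ⟨hf.1 0 (by omega), h.symm⟩)
      (hne _ _ (by omega) (by omega) (by omega)) (hne _ _ (by omega) (by omega) (by omega))
      (hne _ _ (by omega) (by omega) (by omega))
    have := hdeg _ (hf.1 j hj)
    omega
  · have a1 := hf.2.2 i (by omega)
    have a2 := hf.2.2 (i - 1) (by omega)
    rw [Nat.sub_add_cancel (by omega)] at a2
    have := three_le_nb (mem_nb.2 ⟨hf.1 (i + 1) (by omega), a1⟩)
      (mem_nb.2 ⟨hf.1 (i - 1) (by omega), a2.symm⟩) (mem_nb.2 ⟨hf.1 j (by omega), h⟩)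
      (hne _ _ (by omega) (by omega) (by omega)) (hne _ _ (by omega) (by omega) (by omega))
      (hne _ _ (by omega) (by omega) (by omega))
    have := hdeg _ (hf.1 i (by omega))
    omega

/-- Paths and cycles. Every fifth vertex of a spanning path is chosen, starting with the third one
if the order is divisible by five and with the first one otherwise. -/
lemma done_of_deg_le_two {S : Finset V} (hS : Conn G S) (hdeg : ∀ v ∈ S, #(nb G S v) ≤ 2)
    (hb : ¬ Bad G S) : Done G S := by
  obtain ⟨f, hf, hsurj⟩ := exists_spanning_path hS hdeg
  have hadj : ∀ i j, i < #S → j < #S → G.Adj (f i) (f j) →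
      j = i + 1 ∨ i = j + 1 ∨ (i = 0 ∧ j + 1 = #S) ∨ (j = 0 ∧ i + 1 = #S) := by
    intro i j hi hj h
    rcases lt_trichotomy i j with hij | rfl | hij
    · have := hf.adj hdeg hij hj h
      tauto
    · exact absurd h (G.loopless.irrefl _)
    · have := hf.adj hdeg hij hi h.symm
      tauto
  have h3 : #S ≠ 3 := fun e => hb (Or.inl e)
  by_cases h2 : #S ≤ 2
  · exact ⟨∅, by simp, isol_of_card S h2 fun a ha _ => ha⟩
  by_cases h6 : #S = 6
  · rw [h6] at hf hsurj hadj
    have hn : ¬ G.Adj (f 5) (f 0) := by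
      intro h50
      refine hb (Or.inr ⟨fun i => f i, ?_, ?_, ?_⟩)
      · exact fun i j e => Fin.ext (hf.2.1 i i.2 j j.2 e)
      · exact fun a => ⟨fun ha => by obtain ⟨i, hi, rfl⟩ := hsurj a ha; exact ⟨⟨i, hi⟩, rfl⟩,
          by rintro ⟨i, rfl⟩; exact hf.1 i i.2⟩
      · have key : ∀ i j : Fin 6, ((j : ℕ) = i + 1 ∨ (i : ℕ) = j + 1 ∨
            ((i : ℕ) = 0 ∧ (j : ℕ) + 1 = 6) ∨ ((j : ℕ) = 0 ∧ (i : ℕ) + 1 = 6)) ↔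
            (j = i + 1 ∨ i = j + 1) := by decide
        intro i j
        rw [← key]
        refine ⟨hadj i j i.2 j.2, ?_⟩
        change _ → G.Adj (f i) (f j)
        rintro (h | h | ⟨h, h'⟩ | ⟨h, h'⟩)
        · rw [h]; exact hf.2.2 i (by omega)
        · rw [h]; exact (hf.2.2 j (by omega)).symm
        · rw [h, show (j : ℕ) = 5 by omega]; exact h50.symm
        · rw [h, show (i : ℕ) = 5 by omega]; exact h50
    refine ⟨{f 2}, by simp [h6], ?_⟩
    have hres : ∀ i < 6, ¬ Dom G {f 2} (f i) → i = 0 ∨ i = 4 ∨ i = 5 := by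
      intro i hi hd
      have n2 : i ≠ 2 := by rintro rfl; exact hd ⟨f 2, by simp, Or.inl rfl⟩
      have n3 : i ≠ 3 := by
        rintro rfl; exact hd ⟨f 2, by simp, Or.inr (hf.2.2 2 (by omega))⟩
      have n1 : i ≠ 1 := by
        rintro rfl; exact hd ⟨f 2, by simp, Or.inr (hf.2.2 1 (by omega)).symm⟩
      omega
    intro a b c ha hb hc na nb nc hab hbc
    obtain ⟨i, hi, rfl⟩ := hsurj a ha
    obtain ⟨j, hj, rfl⟩ := hsurj b hb
    obtain ⟨k, hk, rfl⟩ := hsurj c hc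
    have r1 := hres i hi na
    have r2 := hres j hj nb
    have r3 := hres k hk nc
    have e1 := hadj i j hi hj hab
    have e2 := hadj j k hj hk hbc
    have x1 : ¬ (i = 5 ∧ j = 0) := by rintro ⟨rfl, rfl⟩; exact hn hab
    have x2 : ¬ (i = 0 ∧ j = 5) := by rintro ⟨rfl, rfl⟩; exact hn hab.symm
    have x3 : ¬ (j = 5 ∧ k = 0) := by rintro ⟨rfl, rfl⟩; exact hn hbc
    have x4 : ¬ (j = 0 ∧ k = 5) := by rintro ⟨rfl, rfl⟩; exact hn hbc.symm
    have : i = k := by omega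
    rw [this]
  by_cases h5 : #S % 5 = 0
  · refine ⟨(range (#S / 5)).image (fun q => f (5 * q + 2)), ?_, ?_⟩
    · have := card_image_le (s := range (#S / 5)) (f := fun q => f (5 * q + 2))
      rw [card_range] at this
      omega
    have hmem : ∀ j < #S, j % 5 = 2 → f j ∈ (range (#S / 5)).image (fun q => f (5 * q + 2)) := by
      intro j hj hj5
      refine mem_image.2 ⟨j / 5, by rw [mem_range]; omega, ?_⟩
      congr 1
      omega
    have hres : ∀ i < #S, ¬ Dom G ((range (#S / 5)).image (fun q => f (5 * q + 2))) (f i) →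
        i % 5 = 0 ∨ i % 5 = 4 := by
      intro i hi hd
      by_contra! hne
      have : i % 5 = 1 ∨ i % 5 = 2 ∨ i % 5 = 3 := by omega
      rcases this with h | h | h
      · exact hd ⟨f (i + 1), hmem _ (by omega) (by omega), Or.inr (hf.2.2 i (by omega)).symm⟩
      · exact hd ⟨f i, hmem _ hi h, Or.inl rfl⟩
      · have := hf.2.2 (i - 1) (by omega)
        rw [Nat.sub_add_cancel (by omega)] at this
        exact hd ⟨f (i - 1), hmem _ (by omega) (by omega), Or.inr this⟩
    intro a b c ha hb hc na nb nc hab hbc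
    obtain ⟨i, hi, rfl⟩ := hsurj a ha
    obtain ⟨j, hj, rfl⟩ := hsurj b hb
    obtain ⟨k, hk, rfl⟩ := hsurj c hc
    have r1 := hres i hi na
    have r2 := hres j hj nb
    have r3 := hres k hk nc
    have e1 := hadj i j hi hj hab
    have e2 := hadj j k hj hk hbc
    have : i = k := by omega
    rw [this]
  · refine ⟨(range (#S / 5 + 1)).image (fun q => f (5 * q)), ?_, ?_⟩
    · have := card_image_le (s := range (#S / 5 + 1)) (f := fun q => f (5 * q))
      rw [card_range] at this
      omega
    have hmem : ∀ j < #S, j % 5 = 0 → f j ∈ (range (#S / 5 + 1)).image (fun q => f (5 * q)) := by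
      intro j hj hj5
      refine mem_image.2 ⟨j / 5, by rw [mem_range]; omega, ?_⟩
      congr 1
      omega
    have hres : ∀ i < #S, ¬ Dom G ((range (#S / 5 + 1)).image (fun q => f (5 * q))) (f i) →
        i % 5 = 2 ∨ (i % 5 = 3) := by
      intro i hi hd
      by_contra! hne
      have : i % 5 = 0 ∨ i % 5 = 1 ∨ i % 5 = 4 ∧ i + 1 < #S := by omega
      rcases this with h | h | ⟨h, h'⟩
      · exact hd ⟨f i, hmem _ hi h, Or.inl rfl⟩
      · have := hf.2.2 (i - 1) (by omega)
        rw [Nat.sub_add_cancel (by omega)] at this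
        exact hd ⟨f (i - 1), hmem _ (by omega) (by omega), Or.inr this⟩
      · exact hd ⟨f (i + 1), hmem _ h' (by omega), Or.inr (hf.2.2 i h').symm⟩
    intro a b c ha hb hc na nb nc hab hbc
    obtain ⟨i, hi, rfl⟩ := hsurj a ha
    obtain ⟨j, hj, rfl⟩ := hsurj b hb
    obtain ⟨k, hk, rfl⟩ := hsurj c hc
    have r1 := hres i hi na
    have r2 := hres j hj nb
    have r3 := hres k hk nc
    have e1 := hadj i j hi hj hab
    have e2 := hadj j k hj hk hbc
    have : i = k := by omega
    rw [this]

/-! ### The bound for whole graphs -/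

lemma done_of_conn (S : Finset V) (hS : Conn G S) (hb : ¬ Bad G S) : Done G S := by
  induction S using Finset.strongInduction with
  | H S ih =>
    by_contra hnd
    have h : Crit G S := ⟨hS, hnd, ih⟩
    exact hnd (done_of_deg_le_two hS (fun v hv => h.max_deg hv) hb)

lemma conn_univ [Fintype V] (h : G.Connected) : Conn G univ := by
  obtain ⟨a⟩ := h.nonempty
  refine ⟨⟨a, mem_univ a⟩, fun T hT hne => ?_⟩
  obtain ⟨t, ht⟩ := hne
  refine eq_univ_iff_forall.2 fun z => ?_
  obtain ⟨w⟩ := h.preconnected t z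
  induction w with
  | nil => exact ht
  | cons hab _ ih => exact ih (hT.2 _ ht _ (mem_univ _) hab)

lemma Hex.iso [Fintype V] (h : Hex G univ) : Nonempty (G ≃g cycleGraph 6) := by
  obtain ⟨f, hinj, hsurj, hadj⟩ := h
  let e : Fin 6 ≃ V := Equiv.ofBijective f ⟨hinj, fun a => (hsurj a).1 (mem_univ a)⟩
  refine ⟨(RelIso.symm ⟨e, ?_⟩ : G ≃g cycleGraph 6)⟩
  intro i j
  change G.Adj (f i) (f j) ↔ _
  rw [hadj]
  have key : ∀ i j : Fin 6, (j = i + 1 ∨ i = j + 1) ↔ (i - j = 1 ∨ j - i = 1) := by decide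
  rw [key, cycleGraph_adj]

/-- A connected graph on three vertices contains a spanning path, whose ends may or may not be
adjacent. -/
lemma iso_of_card_three [Fintype V] (h : Conn G univ) (h3 : #(univ : Finset V) = 3) :
    Nonempty (G ≃g pathGraph 3) ∨ Nonempty (G ≃g cycleGraph 3) := by
  have hdeg : ∀ v ∈ (univ : Finset V), #(nb G univ v) ≤ 2 := by
    intro v _
    have h1 : nb G univ v ⊆ univ.erase v := fun z hz =>
      mem_erase.2 ⟨(mem_nb.1 hz).2.ne', mem_univ z⟩
    have := card_le_card h1
    rw [card_erase_of_mem (mem_univ v)] at this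
    omega
  obtain ⟨f, hf, hsurj⟩ := exists_spanning_path h hdeg
  rw [h3] at hf hsurj
  let e : Fin 3 ≃ V := Equiv.ofBijective (fun i => f i)
    ⟨fun i j e => Fin.ext (hf.2.1 i i.2 j j.2 e), fun a => by
      obtain ⟨i, hi, rfl⟩ := hsurj a (mem_univ a); exact ⟨⟨i, hi⟩, rfl⟩⟩
  have h01 : G.Adj (f 0) (f 1) := hf.2.2 0 (by omega)
  have h12 : G.Adj (f 1) (f 2) := hf.2.2 1 (by omega)
  by_cases h02 : G.Adj (f 0) (f 2)
  · right
    refine ⟨(RelIso.symm ⟨e, ?_⟩ : G ≃g cycleGraph 3)⟩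
    intro i j
    change G.Adj (f i) (f j) ↔ _
    rw [cycleGraph_adj]
    fin_cases i <;> fin_cases j <;>
      simp [h01, h12, h02, h01.symm, h12.symm, h02.symm] <;> decide
  · left
    have h20 : ¬ G.Adj (f 2) (f 0) := fun e => h02 e.symm
    refine ⟨(RelIso.symm ⟨e, ?_⟩ : G ≃g pathGraph 3)⟩
    intro i j
    change G.Adj (f i) (f j) ↔ _
    rw [pathGraph_adj]
    fin_cases i <;> fin_cases j <;>
      simp [h01, h12, h02, h01.symm, h12.symm, h20]

lemma isIsolating_of_isol [Fintype V] {D : Finset V} (h : Isol G univ D) :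
    IsIsolating G (pathGraph 3) (D : Set V) := by
  rintro ⟨φ, hφ⟩
  have hn : ∀ z : ↥(closedNbhd G (D : Set V))ᶜ, ¬ Dom G D z := by
    rintro ⟨z, hz⟩ ⟨u, hu, rfl | hd⟩
    · exact hz (Or.inl hu)
    · exact hz (Or.inr ⟨u, hu, hd⟩)
  have h01 : G.Adj (φ 0) (φ 1) := φ.map_rel (by rw [pathGraph_adj]; simp)
  have h12 : G.Adj (φ 1) (φ 2) := φ.map_rel (by rw [pathGraph_adj]; simp)
  have := h (mem_univ _) (mem_univ _) (mem_univ _) (hn _) (hn _) (hn _) h01 h12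
  exact absurd (hφ (Subtype.ext this)) (by decide)
end
end PThree

theorem stmt13 {V : Type*} [Fintype V] (G : SimpleGraph V)
    (hconn : G.Connected) (n : ℕ) (hn : n = Fintype.card V)
    (hne1 : ¬ Nonempty (G ≃g pathGraph 3))
    (hne2 : ¬ Nonempty (G ≃g cycleGraph 3))
    (hne3 : ¬ Nonempty (G ≃g cycleGraph 6)) :
    (isolNum G (pathGraph 3) : ℚ) ≤ 2 * n / 7 := by
  have hc := PThree.conn_univ hconn
  obtain ⟨D, hD, hI⟩ := PThree.done_of_conn (G := G) Finset.univ hc (by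
    rintro (h3 | h6)
    · exact (PThree.iso_of_card_three hc h3).elim hne1 hne2
    · exact hne3 h6.iso)
  have hle : isolNum G (pathGraph 3) ≤ D.card :=
    Nat.sInf_le ⟨D, PThree.isIsolating_of_isol hI, Set.ncard_coe_finset D⟩
  rw [Finset.card_univ, ← hn] at hD
  rw [le_div_iff₀ (by norm_num)]
  have : isolNum G (pathGraph 3) * 7 ≤ 2 * n := by omega
  exact_mod_cast this
end

section
/- If G is a connected graph of order n that is not isomorphic to the 7-cycle C_7, then ι(G, P_4) ≤ n/4. -/
open SimpleGraph

/-!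
Fix the graph `G` and argue about finite sets `S` of vertices by strong induction on `S`: if no
component of `G[S]` is a 7-cycle, then some `D` with `4 |D| ≤ |S|` dominates enough of `S` to leave
no 4-vertex path (`main`). Call such an `S` *good*. Connectedness plays no role in the induction;
for connected `G` it only says that the whole vertex set is good unless `G ≅ C₇`.

The basic move (`reduce`) removes a block `Y ⊆ S` and pays for it with `D`, `4 |D| ≤ |Y|`, where `D`
leaves no 4-vertex path in `Y` and separates the undominated part of `Y` from the undominated part
of `S \ Y`. It succeeds whenever `S \ Y` is good. Suppose that `S` is a minimal counterexample.

* `cut_vertex`: no `S \ {x}` has a 7-cycle component. Otherwise put `x` in `D`. All 7-cycle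
  components of `S \ {x}` are adjacent to `x`, so each has been reduced to at most six vertices
  that one further vertex handles, and `1 + r` vertices pay for `1 + 7 r` when `r ≥ 1`.
* If `v` has degree at least three, `N[v]` is a block unless `S \ N[v]` has a 7-cycle component
  `h`. That component is attached to some `x ∈ N(v)`, say at `h 0`. Taking the block
  `{x, h 0, h 1, h 6}` forces a 7-cycle through `v` and `N(v) \ {x}`, so that `v` has degree three
  (`deg_le_three`).
* So all degrees are at most three, and at most six of the seven vertices of `h` are attached to
  `N(v)`. Since `2` generates `ℤ/7`, `h` can be rotated so that `h 0` is attached to some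
  `x ∈ N(v)` while `h 2` is not attached to anything. The block `h ∪ {x}` with `D = {h 0, h 4}` then
  forces a second 7-cycle `c` with `c 0 = v`, and the 15 vertices of `h ∪ c ∪ {x}` form a block for
  `{x, h 4, c 3}` or `{x, h 4, c 4}` (`subcubic`).
* If all degrees are at most two, removing any block keeps `S` good, and a block is found near a
  vertex of degree at most one, inside a long path, or as a short cycle (`no_leaf`, `two_regular`).
-/

namespace P4Iso

/-! ### Dominated vertices, isolating sets and 7-cycle components -/

variable {V : Type*}

/-- `v` lies in the closed neighbourhood of `D`. -/
def Dom (G : SimpleGraph V) (D : Finset V) (v : V) : Prop :=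
  v ∈ D ∨ ∃ u ∈ D, G.Adj u v

/-- `D` leaves no path on four vertices in `G[S]`. The set `D` need not be contained in `S`. -/
def Iso (G : SimpleGraph V) (S D : Finset V) : Prop :=
  ∀ a ∈ S, ∀ b ∈ S, ∀ c ∈ S, ∀ d ∈ S, ¬ Dom G D a → ¬ Dom G D b → ¬ Dom G D c → ¬ Dom G D d →
    [a, b, c, d].Nodup → G.Adj a b → G.Adj b c → G.Adj c d → False

/-- `c` runs once around a 7-cycle that is a component of `G[S]`; indices are added modulo `7`. -/
def IsC7 (G : SimpleGraph V) (S : Finset V) (c : Fin 7 → V) : Prop :=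
  Function.Injective c ∧ (∀ i, c i ∈ S) ∧
    ∀ i, ∀ u ∈ S, G.Adj (c i) u ↔ u = c (i + 1) ∨ u = c (i - 1)

/-- No component of `G[S]` is a 7-cycle. -/
def Good (G : SimpleGraph V) (S : Finset V) : Prop := ∀ c, ¬ IsC7 G S c

/-- `G[S]` satisfies the bound: at most `|S| / 4` vertices leave no 4-vertex path. -/
def Solved (G : SimpleGraph V) (S : Finset V) : Prop :=
  ∃ D : Finset V, 4 * D.card ≤ S.card ∧ Iso G S D

/-- The neighbours of `v` inside `S`. -/
noncomputable def nbrs (G : SimpleGraph V) (S : Finset V) (v : V) : Finset V := by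
  classical exact S.filter (G.Adj v)

lemma mem_nbrs {G : SimpleGraph V} {S : Finset V} {v u : V} :
    u ∈ nbrs G S v ↔ u ∈ S ∧ G.Adj v u := by
  classical simp [nbrs]

lemma Dom.mono {G : SimpleGraph V} {D D' : Finset V} {v : V} (h : D ⊆ D') (hv : Dom G D v) :
    Dom G D' v := by
  rcases hv with hv | ⟨u, hu, huv⟩
  · exact Or.inl (h hv)
  · exact Or.inr ⟨u, h hu, huv⟩

variable [DecidableEq V]

/-- Isolating sets of `Y` and `S \ Y` combine if no edge joins undominated vertices of the two. -/
lemma iso_union {G : SimpleGraph V} {S Y D D' : Finset V}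
    (hcl : ∀ y ∈ Y, ¬ Dom G D y → ∀ u ∈ S, G.Adj y u → ¬ Dom G D u → u ∈ Y)
    (hY : Iso G Y D) (h' : Iso G (S \ Y) D') : Iso G S (D ∪ D') := by
  intro a ha b hb c hc d hd na nb nc nd hnd hab hbc hcd
  have key : ∀ v, ¬ Dom G (D ∪ D') v → ¬ Dom G D v ∧ ¬ Dom G D' v := fun v hv =>
    ⟨fun h => hv (h.mono Finset.subset_union_left), fun h => hv (h.mono Finset.subset_union_right)⟩
  obtain ⟨na, na'⟩ := key a na
  obtain ⟨nb, nb'⟩ := key b nb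
  obtain ⟨nc, nc'⟩ := key c nc
  obtain ⟨nd, nd'⟩ := key d nd
  by_cases hY' : b ∈ Y
  · have h1 := hcl b hY' nb a ha hab.symm na
    have h2 := hcl b hY' nb c hc hbc nc
    have h3 := hcl c h2 nc d hd hcd nd
    exact hY a h1 b hY' c h2 d h3 na nb nc nd hnd hab hbc hcd
  · have h1 : a ∉ Y := fun h => hY' (hcl a h na b hb hab nb)
    have h2 : c ∉ Y := fun h => hY' (hcl c h nc b hb hbc.symm nb)
    have h3 : d ∉ Y := fun h => h2 (hcl d h nd c hc hcd.symm nc)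
    exact h' a (by simp [*]) b (by simp [*]) c (by simp [*]) d (by simp [*])
      na' nb' nc' nd' hnd hab hbc hcd

/-- The block `Y`, paid for by `D`, can be removed from `S`. -/
lemma reduce {G : SimpleGraph V} {S : Finset V}
    (IH : ∀ T : Finset V, T ⊂ S → Good G T → Solved G T)
    (Y D : Finset V) (hYS : Y ⊆ S) (hne : Y.Nonempty) (hcard : 4 * D.card ≤ Y.card)
    (hcl : ∀ y ∈ Y, ¬ Dom G D y → ∀ u ∈ S, G.Adj y u → ¬ Dom G D u → u ∈ Y)
    (hY : Iso G Y D) (hgood : Good G (S \ Y)) : Solved G S := by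
  obtain ⟨D', hD', hiso⟩ := IH (S \ Y) (Finset.sdiff_ssubset hYS hne) hgood
  refine ⟨D ∪ D', ?_, iso_union hcl hY hiso⟩
  have h1 := Finset.card_union_le D D'
  have h2 := Finset.card_sdiff_add_card_eq_card hYS
  omega

/-- A set covered by two parts of at most three vertices with no edges between them contains no
path on four vertices. -/
lemma iso_of_parts {G : SimpleGraph V} {Y D A B : Finset V} (hA : A.card ≤ 3) (hB : B.card ≤ 3)
    (hcov : ∀ y ∈ Y, ¬ Dom G D y → y ∈ A ∨ y ∈ B)
    (hAB : ∀ a ∈ A, ∀ b ∈ B, ¬ G.Adj a b) : Iso G Y D := by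
  have main : ∀ X : Finset V, X.card ≤ 3 → ∀ a b c d, [a, b, c, d].Nodup → a ∈ X → b ∈ X →
      c ∈ X → d ∈ X → False := by
    intro X hX a b c d hnd ha hb hc hd
    have : ({a, b, c, d} : Finset V).card = 4 := by
      have := List.toFinset_card_of_nodup hnd
      simpa using this
    have h2 : ({a, b, c, d} : Finset V) ⊆ X := by
      intro x; simp only [Finset.mem_insert, Finset.mem_singleton]; rintro (rfl | rfl | rfl | rfl) <;> assumption
    have := Finset.card_le_card h2
    omega
  intro a ha b hb c hc d hd na nb nc nd hnd hab hbc hcd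
  have step : ∀ X Z : Finset V, (∀ a ∈ X, ∀ b ∈ Z, ¬ G.Adj a b) →
      (∀ y ∈ Y, ¬ Dom G D y → y ∈ X ∨ y ∈ Z) → X.card ≤ 3 → a ∈ X → False := by
    intro X Z hXZ hc' hX haX
    have hbX := (hc' b hb nb).resolve_right fun h => hXZ a haX b h hab
    have hcX := (hc' c hc nc).resolve_right fun h => hXZ b hbX c h hbc
    have hdX := (hc' d hd nd).resolve_right fun h => hXZ c hcX d h hcd
    exact main X hX a b c d hnd haX hbX hcX hdX
  rcases hcov a ha na with h | h
  · exact step A B hAB hcov hA h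
  · exact step B A (fun x hx y hy e => hAB y hy x hx e.symm) (fun y hy hn => (hcov y hy hn).symm) hB h

omit [DecidableEq V] in
lemma IsC7.rotate {G : SimpleGraph V} {S : Finset V} {c : Fin 7 → V} (h : IsC7 G S c) (k : Fin 7) :
    IsC7 G S (fun i => c (i + k)) := by
  refine ⟨fun i j hij => by simpa using h.1 hij, fun i => h.2.1 _, fun i u hu => ?_⟩
  rw [h.2.2 _ u hu, add_right_comm i k 1, add_sub_right_comm i k 1]

omit [DecidableEq V] in
lemma IsC7.adj {G : SimpleGraph V} {S : Finset V} {c : Fin 7 → V} (h : IsC7 G S c) (i j : Fin 7) :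
    G.Adj (c i) (c j) ↔ j = i + 1 ∨ j = i - 1 := by
  rw [h.2.2 i _ (h.2.1 j), h.1.eq_iff, h.1.eq_iff]

omit [DecidableEq V] in
lemma IsC7.not_dom {G : SimpleGraph V} {S D : Finset V} {c : Fin 7 → V} (h : IsC7 G S c)
    {i j : Fin 7} (hj : c j ∈ D) (hn : ¬ Dom G D (c i)) : i ≠ j ∧ i ≠ j + 1 ∧ i ≠ j - 1 := by
  refine ⟨?_, ?_, ?_⟩ <;> rintro rfl
  · exact hn (Or.inl hj)
  · exact hn (Or.inr ⟨_, hj, (h.adj _ _).2 (Or.inl rfl)⟩)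
  · exact hn (Or.inr ⟨_, hj, (h.adj _ _).2 (Or.inr rfl)⟩)

/-- Every nonzero `k` generates the additive group `Fin 7`. -/
lemma fin7_all {p : Fin 7 → Prop} (k : Fin 7) (hk : k ≠ 0) (i : Fin 7) (hi : p i)
    (h : ∀ j, p j → p (j + k)) (j : Fin 7) : p j := by
  have : ∀ n : ℕ, p (i + n • k) := by
    intro n
    induction n with
    | zero => simpa
    | succ n ih => rw [succ_nsmul, ← add_assoc]; exact h _ ih
  have key : ∀ i j k : Fin 7, k ≠ 0 → ∃ n : Fin 7, i + n.val • k = j := by decide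
  obtain ⟨n, hn⟩ := key i j k hk
  exact hn ▸ this n

omit [DecidableEq V] in
/-- A 7-cycle component of `T` is a component of a larger set `S` if `S` adds no neighbour to it. -/
lemma IsC7.of_closed {G : SimpleGraph V} {S T : Finset V} {c : Fin 7 → V} (h : IsC7 G T c)
    (hTS : T ⊆ S) (hn : ∀ i, ∀ u ∈ S, G.Adj (c i) u → u ∈ T) : IsC7 G S c := by
  refine ⟨h.1, fun i => hTS (h.2.1 i), fun i u hu => ⟨fun ha => (h.2.2 i u (hn i u hu ha)).1 ha, ?_⟩⟩
  intro hh
  refine (h.2.2 i u ?_).2 hh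
  rcases hh with rfl | rfl <;> exact h.2.1 _

/-- If every 7-cycle component of `T` is adjacent to `x`, then adding `x` to `D` isolates `T` within
the usual budget, and three units are saved if there is such a component. The components are removed
one at a time. -/
lemma cut_aux {G : SimpleGraph V} {S : Finset V} (x : V)
    (IH : ∀ T : Finset V, T ⊂ S → Good G T → Solved G T) :
    ∀ T : Finset V, T ⊂ S → (∀ c, IsC7 G T c → ∃ i, G.Adj x (c i)) →
      ∃ D : Finset V, Iso G T (insert x D) ∧ 4 * D.card ≤ T.card ∧
        (¬ Good G T → 4 * D.card + 3 ≤ T.card) := by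
  intro T
  induction T using Finset.strongInduction with
  | H T ih =>
  intro hTS hlink
  by_cases hg : Good G T
  · obtain ⟨D, hD, hi⟩ := IH T hTS hg
    refine ⟨D, ?_, hD, fun h => absurd hg h⟩
    intro a ha b hb c hc d hd na nb nc nd
    exact hi a ha b hb c hc d hd (fun h => na (h.mono (Finset.subset_insert _ _)))
      (fun h => nb (h.mono (Finset.subset_insert _ _)))
      (fun h => nc (h.mono (Finset.subset_insert _ _)))
      (fun h => nd (h.mono (Finset.subset_insert _ _)))
  · unfold Good at hg
    push Not at hg
    obtain ⟨c₀, hc₀⟩ := hg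
    obtain ⟨k, hk⟩ := hlink c₀ hc₀
    obtain ⟨c, hc, hx⟩ : ∃ c, IsC7 G T c ∧ G.Adj x (c 0) :=
      ⟨_, hc₀.rotate k, by simpa using hk⟩
    set H := Finset.univ.image c with hH
    have hHT : H ⊆ T := by
      intro y hy
      obtain ⟨i, -, rfl⟩ := Finset.mem_image.1 hy
      exact hc.2.1 i
    have hHc : H.card = 7 := by
      rw [hH, Finset.card_image_of_injective _ hc.1]; rfl
    have hss : T \ H ⊂ T := Finset.sdiff_ssubset hHT (Finset.card_pos.1 (by omega))
    obtain ⟨D, hD1, hD2, -⟩ := ih (T \ H) hss (hss.trans hTS) (by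
      intro c' hc'
      apply hlink c'
      apply hc'.of_closed Finset.sdiff_subset
      intro i u hu ha
      rw [Finset.mem_sdiff]
      refine ⟨hu, fun huH => ?_⟩
      obtain ⟨j, -, rfl⟩ := Finset.mem_image.1 huH
      have h1 := hc'.2.1 i
      rw [Finset.mem_sdiff] at h1
      apply h1.2
      rcases (hc.2.2 j _ h1.1).1 ha.symm with h | h <;> rw [h] <;> simp [hH])
    have hcard := Finset.card_sdiff_add_card_eq_card hHT
    have hins := Finset.card_insert_le (c 3) D
    refine ⟨insert (c 3) D, ?_, by omega, fun _ => by omega⟩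
    · have := iso_union (S := T) (Y := H) (D := {x, c 3}) (D' := insert x D) (G := G) ?_ ?_ hD1
      · convert this using 1
        ext y; simp
      · intro y hy _ u hu ha _
        obtain ⟨j, -, rfl⟩ := Finset.mem_image.1 hy
        rcases (hc.2.2 j _ hu).1 ha with h | h <;> rw [h] <;> simp [hH]
      · apply iso_of_parts (A := {c 1, c 5, c 6}) (B := ∅) Finset.card_le_three (by simp)
        · intro y hy hn
          obtain ⟨j, -, rfl⟩ := Finset.mem_image.1 hy
          have n1 := hc.not_dom (j := 3) (by simp) hn
          have n2 : j ≠ 0 := by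
            rintro rfl
            exact hn (Or.inr ⟨x, by simp, hx⟩)
          have key : ∀ j : Fin 7, (j ≠ 3 ∧ j ≠ 3 + 1 ∧ j ≠ 3 - 1) → j ≠ 0 →
              j = 1 ∨ j = 5 ∨ j = 6 := by decide
          rcases key j n1 n2 with rfl | rfl | rfl <;> simp
        · simp

/-- In a minimal counterexample no single vertex separates off a 7-cycle. -/
lemma cut_vertex {G : SimpleGraph V} {S : Finset V}
    (IH : ∀ T : Finset V, T ⊂ S → Good G T → Solved G T) (hS : Good G S) {x : V} (hx : x ∈ S)
    (hbad : ¬ Good G (S.erase x)) : Solved G S := by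
  -- a 7-cycle component of `S.erase x` not adjacent to `x` would be a component of `S`
  obtain ⟨D, h1, -, h3⟩ := cut_aux x IH (S.erase x) (Finset.erase_ssubset hx) (by
    intro c hc
    by_contra hcon
    push Not at hcon
    refine hS c (hc.of_closed (Finset.erase_subset _ _) fun i u hu ha => ?_)
    rw [Finset.mem_erase]
    refine ⟨?_, hu⟩
    rintro rfl
    exact hcon i ha.symm)
  have h3 := h3 hbad
  have := Finset.card_erase_add_one hx
  have h4 := Finset.card_insert_le x D
  refine ⟨insert x D, by omega, ?_⟩
  intro a ha b hb c hc d hd na nb nc nd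
  have key : ∀ v ∈ S, ¬ Dom G (insert x D) v → v ∈ S.erase x := by
    intro v hv hn
    rw [Finset.mem_erase]
    refine ⟨?_, hv⟩
    rintro rfl
    exact hn (Or.inl (by simp))
  exact h1 a (key a ha na) b (key b hb nb) c (key c hc nc) d (key d hd nd) na nb nc nd

/-! ### Vertices of degree at least three -/

lemma four_nbrs {G : SimpleGraph V} {S : Finset V} {w : V} (hdeg : (nbrs G S w).card ≤ 3)
    (a b c d : V) (hnd : [a, b, c, d].Nodup) (h : ∀ y ∈ [a, b, c, d], y ∈ S ∧ G.Adj w y) : False := by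
  have h1 : (([a, b, c, d] : List V).toFinset).card = 4 := List.toFinset_card_of_nodup hnd
  have h2 : ([a, b, c, d] : List V).toFinset ⊆ nbrs G S w := by
    intro y hy
    rw [mem_nbrs]
    exact h y (List.mem_toFinset.1 hy)
  have := Finset.card_le_card h2
  omega

/-- A 7-cycle component of `S \ N[v]` has outside neighbours only in `N(v)`. -/
lemma hfacts {G : SimpleGraph V} {S : Finset V} {v : V} {h : Fin 7 → V} (hv : v ∈ S)
    (hh : IsC7 G (S \ insert v (nbrs G S v)) h) :
    (∀ i, h i ∈ S) ∧ (∀ i, h i ≠ v) ∧ (∀ i, h i ∉ nbrs G S v) ∧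
    (∀ i, ∀ u ∈ S, G.Adj (h i) u → u ∈ nbrs G S v ∨ u = h (i + 1) ∨ u = h (i - 1)) := by
  have h1 : ∀ i, h i ∈ S ∧ h i ≠ v ∧ h i ∉ nbrs G S v := by
    intro i
    have := hh.2.1 i
    simp only [Finset.mem_sdiff, Finset.mem_insert, not_or] at this
    exact this
  refine ⟨fun i => (h1 i).1, fun i => (h1 i).2.1, fun i => (h1 i).2.2, fun i u hu ha => ?_⟩
  by_cases hun : u ∈ nbrs G S v
  · exact Or.inl hun
  · refine Or.inr ((hh.2.2 i u ?_).1 ha)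
    simp only [Finset.mem_sdiff, Finset.mem_insert, not_or]
    refine ⟨hu, ?_, hun⟩
    rintro rfl
    exact (h1 i).2.2 (mem_nbrs.2 ⟨(h1 i).1, ha.symm⟩)

/-- In a minimal counterexample, `N[v]` is not a removable block when `v` has degree at least three,
so `S \ N[v]` has a 7-cycle component. -/
lemma exists_far {G : SimpleGraph V} {S : Finset V}
    (IH : ∀ T : Finset V, T ⊂ S → Good G T → Solved G T) (hns : ¬ Solved G S)
    {v : V} (hv : v ∈ S) (hd : 3 ≤ (nbrs G S v).card) :
    ∃ h, IsC7 G (S \ insert v (nbrs G S v)) h := by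
  by_contra hcon
  push Not at hcon
  have hdom : ∀ y ∈ insert v (nbrs G S v), Dom G {v} y := by
    intro y hy
    rcases Finset.mem_insert.1 hy with rfl | hy
    · exact Or.inl (by simp)
    · exact Or.inr ⟨v, by simp, (mem_nbrs.1 hy).2⟩
  refine hns (reduce IH (insert v (nbrs G S v)) {v} ?_ ⟨v, by simp⟩ ?_ ?_ ?_ hcon)
  · intro y hy
    rcases Finset.mem_insert.1 hy with rfl | hy
    · exact hv
    · exact (mem_nbrs.1 hy).1
  · rw [Finset.card_insert_of_notMem (by simp [mem_nbrs])]
    simp; omega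
  · intro y hy hn
    exact absurd (hdom y hy) hn
  · intro a ha b hb c hc d hd na
    exact absurd (hdom a ha) na

lemma exists_linked {G : SimpleGraph V} {S : Finset V} (hS : Good G S)
    {v : V} (hv : v ∈ S) {h : Fin 7 → V} (hh : IsC7 G (S \ insert v (nbrs G S v)) h) :
    ∃ i, ∃ x ∈ nbrs G S v, G.Adj (h i) x := by
  obtain ⟨h1, h2, h3, h4⟩ := hfacts hv hh
  by_contra hcon
  push Not at hcon
  refine hS h (hh.of_closed Finset.sdiff_subset fun i u hu ha => ?_)
  rcases h4 i u hu ha with h | h | h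
  · exact absurd ha (hcon i u h)
  · rw [h]; exact hh.2.1 _
  · rw [h]; exact hh.2.1 _

omit [DecidableEq V] in
/-- A 7-cycle component of `T ∋ v` that meets `N(v)` passes through `v`. -/
lemma contains_v {G : SimpleGraph V} {S T : Finset V} {c : Fin 7 → V} (hc : IsC7 G T c)
    {v : V} (hv : v ∈ T) {i : Fin 7} (hi : c i ∈ nbrs G S v) : ∃ j, v = c j := by
  rcases (hc.2.2 i v hv).1 (mem_nbrs.1 hi).2.symm with h | h
  exacts [⟨_, h⟩, ⟨_, h⟩]

/-- All degrees in a minimal counterexample are at most three. -/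
lemma deg_le_three {G : SimpleGraph V} {S : Finset V}
    (IH : ∀ T : Finset V, T ⊂ S → Good G T → Solved G T) (hS : Good G S) (hns : ¬ Solved G S)
    {v : V} (hv : v ∈ S) : (nbrs G S v).card ≤ 3 := by
  by_contra hdeg
  obtain ⟨h', hh'⟩ := exists_far IH hns hv (by omega)
  obtain ⟨k, x, hxv, hk⟩ := exists_linked hS hv hh'
  obtain ⟨h, hh, hx⟩ : ∃ h, IsC7 G (S \ insert v (nbrs G S v)) h ∧ G.Adj (h 0) x :=
    ⟨_, hh'.rotate k, by simpa using hk⟩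
  obtain ⟨h1, h2, h3, h4⟩ := hfacts hv hh
  have hxS := (mem_nbrs.1 hxv).1
  have hvx := (mem_nbrs.1 hxv).2
  have hxh : ∀ i, x ≠ h i := fun i e => h3 i (e ▸ hxv)
  set Y : Finset V := {x, h 0, h 1, h 6} with hYdef
  have hmemY : ∀ y, y ∈ Y ↔ y = x ∨ y = h 0 ∨ y = h 1 ∨ y = h 6 := by
    intro y; simp [hYdef]
  have hdom : ∀ y ∈ Y, Dom G {h 0} y := by
    intro y hy
    rcases (hmemY y).1 hy with rfl | rfl | rfl | rfl
    · exact Or.inr ⟨h 0, by simp, hx⟩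
    · exact Or.inl (by simp)
    · exact Or.inr ⟨h 0, by simp, (hh.adj _ _).2 (by decide)⟩
    · exact Or.inr ⟨h 0, by simp, (hh.adj _ _).2 (by decide)⟩
  have hYS : Y ⊆ S := by
    intro y hy
    rcases (hmemY y).1 hy with rfl | rfl | rfl | rfl
    · exact hxS
    all_goals exact h1 _
  have hYc : Y.card = 4 := by
    have : [x, h 0, h 1, h 6].Nodup := by
      simp [hxh, hh.1.eq_iff]
    have := List.toFinset_card_of_nodup this
    simpa [hYdef] using this
  have hbad : ¬ Good G (S \ Y) := fun hg => hns <|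
    reduce IH Y {h 0} hYS ⟨x, by simp [hYdef]⟩ (by simp [hYc])
      (fun y hy hn => absurd (hdom y hy) hn) (fun a ha b _ c _ d _ na => absurd (hdom a ha) na) hg
  unfold Good at hbad
  push Not at hbad
  obtain ⟨c, hc⟩ := hbad
  have hcS : ∀ i, c i ∈ S ∧ c i ∉ Y := fun i => Finset.mem_sdiff.1 (hc.2.1 i)
  have hvT : v ∈ S \ Y := by
    rw [Finset.mem_sdiff, hmemY]
    refine ⟨hv, ?_⟩
    rintro (e | e | e | e)
    · exact hvx.ne e
    all_goals exact h2 _ e.symm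
  -- either `c` passes through `v`, or it is a component of `S \ {x}`
  by_cases hcase : ∃ i, c i ∈ nbrs G S v
  · obtain ⟨i, hi⟩ := hcase
    obtain ⟨j, rfl⟩ := contains_v hc hvT hi
    have hsub : nbrs G S (c j) ⊆ {x, c (j + 1), c (j - 1)} := by
      intro u hu
      obtain ⟨hu1, hu2⟩ := mem_nbrs.1 hu
      by_cases huY : u ∈ Y
      · rcases (hmemY u).1 huY with rfl | rfl | rfl | rfl
        · simp
        all_goals exact absurd hu (h3 _)
      · have := (hc.2.2 j u (Finset.mem_sdiff.2 ⟨hu1, huY⟩)).1 hu2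
        simp [this]
    have h5 := Finset.card_le_card hsub
    have h6 := Finset.card_le_three (a := x) (b := c (j + 1)) (c := c (j - 1))
    omega
  · push Not at hcase
    by_cases hP : ∃ i j, c i = h j
    · -- `c` would then stay inside `h`, hence contain `h 0 ∈ Y`
      obtain ⟨i, hP⟩ := hP
      have hall : ∀ i, ∃ j, c i = h j := by
        refine fin7_all (p := fun i => ∃ j, c i = h j) 1 (by decide) i hP ?_
        rintro i ⟨j, hj⟩
        have ha : G.Adj (c i) (c (i + 1)) := (hc.adj _ _).2 (Or.inl rfl)
        rw [hj] at ha
        rcases h4 j _ (hcS _).1 ha with e | e | e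
        · exact absurd e (hcase _)
        · exact ⟨_, e⟩
        · exact ⟨_, e⟩
      choose σ hσ using hall
      have hinj : Function.Injective σ := fun a b hab => hc.1 (by rw [hσ, hσ, hab])
      obtain ⟨i, hi⟩ := (Finite.injective_iff_surjective.1 hinj) 0
      apply (hcS i).2
      rw [hσ, hi, hmemY]
      simp
    · push Not at hP
      apply hns
      apply cut_vertex IH hS hxS
      intro hg
      refine hg c (hc.of_closed ?_ ?_)
      · intro y hy
        rw [Finset.mem_sdiff, hmemY] at hy
        rw [Finset.mem_erase]
        exact ⟨fun e => hy.2 (Or.inl e), hy.1⟩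
      · intro i u hu ha
        rw [Finset.mem_erase] at hu
        rw [Finset.mem_sdiff, hmemY]
        have key : ∀ k, u ≠ h k := by
          rintro k rfl
          rcases h4 k _ (hcS i).1 ha.symm with e | e | e
          · exact hcase _ e
          · exact hP _ _ e
          · exact hP _ _ e
        simp [key, hu.1, hu.2]

/-- A minimal counterexample with maximum degree at most three has no vertex of degree three. -/
lemma subcubic {G : SimpleGraph V} {S : Finset V}
    (IH : ∀ T : Finset V, T ⊂ S → Good G T → Solved G T) (hS : Good G S) (hns : ¬ Solved G S)
    (hdeg : ∀ w ∈ S, (nbrs G S w).card ≤ 3)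
    {v : V} (hv : v ∈ S) (hd : 3 ≤ (nbrs G S v).card) : False := by
  obtain ⟨h', hh'⟩ := exists_far IH hns hv hd
  obtain ⟨h, hh, ⟨x, hxv, hx⟩, hun⟩ : ∃ h, IsC7 G (S \ insert v (nbrs G S v)) h ∧
      (∃ x ∈ nbrs G S v, G.Adj (h 0) x) ∧ (∀ x ∈ nbrs G S v, ¬ G.Adj (h 2) x) := by
    obtain ⟨k, hk⟩ := exists_linked hS hv hh'
    by_contra hcon
    push Not at hcon
    -- otherwise all seven vertices are attached to the three vertices of `N(v)`, one of which is
    -- then adjacent to `v` and to three vertices of the cycle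
    have hall : ∀ j, ∃ x ∈ nbrs G S v, G.Adj (h' j) x := by
      refine fin7_all 2 (by decide) k hk fun j hj => ?_
      have := hcon _ (hh'.rotate j)
      simp only [zero_add] at this
      rw [add_comm j 2]
      exact this hj
    choose f hf using hall
    have hcard : (nbrs G S v).card * 2 < (Finset.univ : Finset (Fin 7)).card := by
      have := hdeg v hv
      simp; omega
    obtain ⟨x, hx, hlt⟩ := Finset.exists_lt_card_fiber_of_mul_lt_card_of_maps_to
      (fun i _ => (hf i).1) hcard
    have hxS := (mem_nbrs.1 hx).1
    have hvx := (mem_nbrs.1 hx).2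
    obtain ⟨h1, h2, h3, h4⟩ := hfacts hv hh'
    obtain ⟨a, b, c, ha, hb, hc, hab, hac, hbc⟩ := Finset.two_lt_card_iff.1 hlt
    simp only [Finset.mem_filter, Finset.mem_univ, true_and] at ha hb hc
    have hadj : ∀ i, f i = x → G.Adj x (h' i) := fun i e => e ▸ (hf i).2.symm
    refine four_nbrs (hdeg x hxS) v (h' a) (h' b) (h' c) ?_ ?_
    · simp [hh'.1.eq_iff, hab, hac, hbc, (h2 _).symm]
    · simp [hv, h1, hvx.symm, hadj, ha, hb, hc]
  obtain ⟨h1, h2, h3, h4⟩ := hfacts hv hh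
  have hxS := (mem_nbrs.1 hxv).1
  have hvx := (mem_nbrs.1 hxv).2
  have hxh : ∀ i, x ≠ h i := fun i e => h3 i (e ▸ hxv)
  set H : Finset V := Finset.univ.image h with hHdef
  have hmemH : ∀ y, y ∈ H ↔ ∃ i, h i = y := by intro y; simp [hHdef]
  have hHS : H ⊆ S := by
    intro y hy; obtain ⟨i, rfl⟩ := (hmemH y).1 hy; exact h1 i
  have hHc : H.card = 7 := by
    rw [hHdef, Finset.card_image_of_injective _ hh.1]; rfl
  have hxH : x ∉ H := by
    rw [hmemH]; rintro ⟨i, hi⟩; exact hxh i hi.symm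
  have hbad : ¬ Good G (S \ insert x H) := by
    intro hg
    have hcov : ∀ y ∈ insert x H, ¬ Dom G {h 0, h 4} y → y = h 2 := by
      intro y hy hn
      rcases Finset.mem_insert.1 hy with rfl | hy
      · exact absurd (Or.inr ⟨h 0, by simp, hx⟩) hn
      · obtain ⟨i, rfl⟩ := (hmemH y).1 hy
        have n1 := hh.not_dom (j := 0) (by simp) hn
        have n2 := hh.not_dom (j := 4) (by simp) hn
        have key : ∀ i : Fin 7, (i ≠ 0 ∧ i ≠ 0 + 1 ∧ i ≠ 0 - 1) → (i ≠ 4 ∧ i ≠ 4 + 1 ∧ i ≠ 4 - 1) →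
            i = 2 := by decide
        rw [key i n1 n2]
    refine hns (reduce IH (insert x H) {h 0, h 4} (Finset.insert_subset hxS hHS) ⟨x, by simp⟩ ?_ ?_ ?_ hg)
    · have := Finset.card_le_two (a := h 0) (b := h 4)
      rw [Finset.card_insert_of_notMem hxH]; omega
    · intro y hy hn u hu ha _
      obtain rfl := hcov y hy hn
      rcases h4 2 u hu ha with e | e | e
      · exact absurd ha (hun u e)
      all_goals simp [e, hmemH]
    · refine iso_of_parts (A := {h 2}) (B := ∅) (by simp) (by simp) ?_ (by simp)
      intro y hy hn
      simp [hcov y hy hn]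
  unfold Good at hbad
  push Not at hbad
  obtain ⟨c', hc'⟩ := hbad
  have hvT : v ∈ S \ insert x H := by
    simp only [Finset.mem_sdiff, Finset.mem_insert, hmemH, not_or, not_exists]
    exact ⟨hv, hvx.ne, h2⟩
  obtain ⟨c, hc, rfl⟩ : ∃ c, IsC7 G (S \ insert x H) c ∧ v = c 0 := by
    by_cases hcase : ∃ i, c' i ∈ nbrs G S v
    · obtain ⟨i, hi⟩ := hcase
      obtain ⟨j, hj⟩ := contains_v hc' hvT hi
      exact ⟨_, hc'.rotate j, by simpa using hj⟩
    · exfalso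
      push Not at hcase
      refine hns (cut_vertex IH hS hxS fun hg => hg c' (hc'.of_closed ?_ ?_))
      · intro y hy
        simp only [Finset.mem_sdiff, Finset.mem_insert, not_or] at hy
        simp [hy]
      · intro i u hu ha
        have hci := hc'.2.1 i
        simp only [Finset.mem_sdiff, Finset.mem_insert, hmemH, not_or, not_exists] at hci
        simp only [Finset.mem_erase] at hu
        simp only [Finset.mem_sdiff, Finset.mem_insert, hmemH, not_or, not_exists]
        refine ⟨hu.2, hu.1, ?_⟩
        rintro k rfl
        rcases h4 k _ hci.1 ha.symm with e | e | e
        · exact hcase _ e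
        · exact hci.2.2 _ e.symm
        · exact hci.2.2 _ e.symm
  have hcS : ∀ i, c i ∈ S ∧ c i ≠ x ∧ ∀ k, h k ≠ c i := by
    intro i
    have hci := hc.2.1 i
    simpa only [Finset.mem_sdiff, Finset.mem_insert, hmemH, not_or, not_exists] using hci
  have hnv : ∀ u ∈ nbrs G S (c 0), u = x ∨ u = c 1 ∨ u = c 6 := by
    intro u hu
    obtain ⟨hu1, hu2⟩ := mem_nbrs.1 hu
    by_cases hux : u = x
    · exact Or.inl hux
    · refine Or.inr ((hc.2.2 0 u ?_).1 hu2)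
      simp only [Finset.mem_sdiff, Finset.mem_insert, hmemH, not_or, not_exists]
      refine ⟨hu1, hux, ?_⟩
      rintro k rfl
      exact h3 _ hu
  -- links between the two cycles only through `c 1` and `c 6`
  have hlink : ∀ i k, G.Adj (h k) (c i) → i = 1 ∨ i = 6 := by
    intro i k ha
    rcases h4 k _ (hcS i).1 ha with e | e | e
    · rcases hnv _ e with e | e | e
      · exact absurd e (hcS i).2.1
      · exact Or.inl (hc.1 e)
      · exact Or.inr (hc.1 e)
    · exact absurd e.symm ((hcS i).2.2 _)
    · exact absurd e.symm ((hcS i).2.2 _)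
  have hc1 : c 1 ∈ nbrs G S (c 0) := mem_nbrs.2 ⟨(hcS 1).1, (hc.adj _ _).2 (by decide)⟩
  have hc6 : c 6 ∈ nbrs G S (c 0) := mem_nbrs.2 ⟨(hcS 6).1, (hc.adj _ _).2 (by decide)⟩
  have hno2 : ∀ i, ¬ G.Adj (h 2) (c i) := by
    intro i ha
    rcases hlink i 2 ha with rfl | rfl
    · exact hun _ hc1 ha
    · exact hun _ hc6 ha
  set K : Finset V := Finset.univ.image c with hKdef
  have hmemK : ∀ y, y ∈ K ↔ ∃ i, c i = y := by intro y; simp [hKdef]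
  have hKc : K.card = 7 := by
    rw [hKdef, Finset.card_image_of_injective _ hc.1]; rfl
  have hHK : Disjoint H K := by
    rw [Finset.disjoint_left]
    intro y hy hy'
    obtain ⟨k, rfl⟩ := (hmemH y).1 hy
    obtain ⟨i, hi⟩ := (hmemK _).1 hy'
    exact (hcS i).2.2 k hi.symm
  have hYc : (insert x (H ∪ K)).card = 15 := by
    rw [Finset.card_insert_of_notMem, Finset.card_union_of_disjoint hHK, hHc, hKc]
    rw [Finset.mem_union, not_or, hmemK]
    refine ⟨hxH, ?_⟩
    rintro ⟨i, hi⟩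
    exact (hcS i).2.1 hi
  have hmemY : ∀ y, y ∈ insert x (H ∪ K) ↔ y = x ∨ (∃ i, h i = y) ∨ ∃ i, c i = y := by
    intro y; rw [Finset.mem_insert, Finset.mem_union, hmemH, hmemK]
  have hYS : insert x (H ∪ K) ⊆ S := by
    intro y hy
    rcases (hmemY y).1 hy with rfl | ⟨i, rfl⟩ | ⟨i, rfl⟩
    exacts [hxS, h1 i, (hcS i).1]
  -- only `x` has neighbours outside `h ∪ c ∪ {x}`
  have hclosed : ∀ y ∈ insert x (H ∪ K), y ≠ x → ∀ u ∈ S, G.Adj y u → u ∈ insert x (H ∪ K) := by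
    intro y hy hyx u hu ha
    rw [hmemY]
    rcases (hmemY y).1 hy with rfl | ⟨i, rfl⟩ | ⟨i, rfl⟩
    · exact absurd rfl hyx
    · rcases h4 i u hu ha with e | e | e
      · rcases hnv _ e with e | e | e
        · exact Or.inl e
        · exact Or.inr (Or.inr ⟨_, e.symm⟩)
        · exact Or.inr (Or.inr ⟨_, e.symm⟩)
      · exact Or.inr (Or.inl ⟨_, e.symm⟩)
      · exact Or.inr (Or.inl ⟨_, e.symm⟩)
    · by_cases hu' : u ∈ insert x H
      · rw [Finset.mem_insert, hmemH] at hu'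
        exact hu'.imp id Or.inl
      · rcases (hc.2.2 i u (Finset.mem_sdiff.2 ⟨hu, hu'⟩)).1 ha with e | e
        · exact Or.inr (Or.inr ⟨_, e.symm⟩)
        · exact Or.inr (Or.inr ⟨_, e.symm⟩)
  have hgood : Good G (S \ insert x (H ∪ K)) := by
    intro b hb
    refine hns (cut_vertex IH hS hxS fun hg => hg b (hb.of_closed ?_ ?_))
    · intro y hy
      simp only [Finset.mem_sdiff, Finset.mem_insert, not_or] at hy
      simp [hy]
    · intro i u hu ha
      rw [Finset.mem_erase] at hu
      have hbi := Finset.mem_sdiff.1 (hb.2.1 i)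
      refine Finset.mem_sdiff.2 ⟨hu.2, fun huY => hbi.2 ?_⟩
      exact hclosed u huY hu.1 _ hbi.1 ha.symm
  have finish : ∀ a : V, Iso G (insert x (H ∪ K)) {x, h 4, a} → False := by
    intro a ha
    refine hns (reduce IH _ {x, h 4, a} hYS ⟨x, by simp⟩ ?_ ?_ ha hgood)
    · have := Finset.card_le_three (a := x) (b := h 4) (c := a)
      omega
    · intro y hy hn u hu hadj _
      refine hclosed y hy ?_ u hu hadj
      rintro rfl
      exact hn (Or.inl (by simp))
  have hcov0 : ∀ a i, ¬ Dom G {x, h 4, a} (c i) → i ≠ 0 := by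
    rintro a i hn rfl
    exact hn (Or.inr ⟨x, by simp, hvx.symm⟩)
  have hcovH : ∀ a i, ¬ Dom G {x, h 4, a} (h i) → i = 1 ∨ i = 2 ∨ i = 6 := by
    intro a i hn
    have n1 := hh.not_dom (j := 4) (by simp) hn
    have n2 : i ≠ 0 := by
      rintro rfl
      exact hn (Or.inr ⟨x, by simp, hx.symm⟩)
    have key : ∀ i : Fin 7, (i ≠ 4 ∧ i ≠ 4 + 1 ∧ i ≠ 4 - 1) → i ≠ 0 →
        i = 1 ∨ i = 2 ∨ i = 6 := by decide
    exact key i n1 n2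
  -- failure of both alternatives gives a vertex of degree four
  have hdichotomy : (¬ G.Adj (h 1) (c 6) ∧ ¬ G.Adj (h 6) (c 1)) ∨
      (¬ G.Adj (h 1) (c 1) ∧ ¬ G.Adj (h 6) (c 6)) := by
    by_contra hcon
    have hch : ∀ i k, c i ≠ h k := fun i k e => (hcS i).2.2 k e.symm
    have key : ∀ i : Fin 7, i + 1 ≠ i - 1 := by decide
    have dh : ∀ i, G.Adj (h i) (c 1) → G.Adj (h i) (c 6) → False := fun i e1 e2 =>
      four_nbrs (hdeg _ (h1 i)) (c 1) (c 6) (h (i + 1)) (h (i - 1))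
        (by simp [hc.1.eq_iff, hh.1.eq_iff, hch, key])
        (by simp [e1, e2, hcS, h1, hh.adj])
    have dc : ∀ i, G.Adj (h 1) (c i) → G.Adj (h 6) (c i) → False := fun i e1 e2 =>
      four_nbrs (hdeg _ (hcS i).1) (h 1) (h 6) (c (i + 1)) (c (i - 1))
        (by simp [hc.1.eq_iff, hh.1.eq_iff, (hch _ _).symm, key])
        (by simp [e1.symm, e2.symm, hcS, h1, hc.adj])
    obtain ⟨p, q⟩ := not_or.1 hcon
    rw [not_and_or, not_not, not_not] at p q
    rcases p with p | p <;> rcases q with q | q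
    exacts [dh 1 q p, dc 6 p q, dc 1 q p, dh 6 p q]
  rcases hdichotomy with ⟨n1, n2⟩ | ⟨n1, n2⟩
  · refine finish (c 3) (iso_of_parts (A := {h 1, h 2, c 1}) (B := {h 6, c 5, c 6})
      Finset.card_le_three Finset.card_le_three ?_ ?_)
    · intro y hy hn
      rcases (hmemY y).1 hy with rfl | ⟨i, rfl⟩ | ⟨i, rfl⟩
      · exact absurd (Or.inl (by simp)) hn
      · rcases hcovH (c 3) i hn with rfl | rfl | rfl <;> simp
      · have n1 := hc.not_dom (j := 3) (by simp) hn
        have key : ∀ i : Fin 7, (i ≠ 3 ∧ i ≠ 3 + 1 ∧ i ≠ 3 - 1) → i ≠ 0 →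
            i = 1 ∨ i = 5 ∨ i = 6 := by decide
        rcases key i n1 (hcov0 _ i hn) with rfl | rfl | rfl <;> simp
    · have n3 : ¬ G.Adj (h 1) (c 5) := fun e => by simpa using hlink _ _ e
      simp [hh.adj, hc.adj, n1, n3, hno2, G.adj_comm (c 1) (h 6), n2]
  · refine finish (c 4) (iso_of_parts (A := {h 1, h 2, c 6}) (B := {h 6, c 1, c 2})
      Finset.card_le_three Finset.card_le_three ?_ ?_)
    · intro y hy hn
      rcases (hmemY y).1 hy with rfl | ⟨i, rfl⟩ | ⟨i, rfl⟩
      · exact absurd (Or.inl (by simp)) hn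
      · rcases hcovH (c 4) i hn with rfl | rfl | rfl <;> simp
      · have n1 := hc.not_dom (j := 4) (by simp) hn
        have key : ∀ i : Fin 7, (i ≠ 4 ∧ i ≠ 4 + 1 ∧ i ≠ 4 - 1) → i ≠ 0 →
            i = 1 ∨ i = 2 ∨ i = 6 := by decide
        rcases key i n1 (hcov0 _ i hn) with rfl | rfl | rfl <;> simp
    · have n3 : ¬ G.Adj (h 1) (c 2) := fun e => by simpa using hlink _ _ e
      simp [hh.adj, hc.adj, n1, n3, hno2, G.adj_comm (c 6) (h 6), n2]

/-! ### Maximum degree at most two -/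

/-- With maximum degree at most two, goodness passes to all subsets: a 7-cycle has no room for
further neighbours. -/
lemma good_sdiff_of_deg_le_two {G : SimpleGraph V} {S : Finset V} (hS : Good G S)
    (hdeg : ∀ w ∈ S, (nbrs G S w).card ≤ 2) (Y : Finset V) : Good G (S \ Y) := by
  intro c hc
  refine hS c (hc.of_closed Finset.sdiff_subset fun i u hu ha => ?_)
  have hcS : ∀ i, c i ∈ S := fun i => (Finset.mem_sdiff.1 (hc.2.1 i)).1
  have hsub : ({c (i + 1), c (i - 1)} : Finset V) ⊆ nbrs G S (c i) := by
    intro y hy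
    rw [mem_nbrs]
    rcases Finset.mem_insert.1 hy with rfl | hy
    · exact ⟨hcS _, (hc.adj _ _).2 (Or.inl rfl)⟩
    · rw [Finset.mem_singleton.1 hy]
      exact ⟨hcS _, (hc.adj _ _).2 (Or.inr rfl)⟩
  have hne : ∀ i : Fin 7, i + 1 ≠ i - 1 := by decide
  have heq := Finset.eq_of_subset_of_card_le hsub (by
    rw [Finset.card_pair (hc.1.ne (hne i))]; exact hdeg _ (hcS i))
  have : u ∈ ({c (i + 1), c (i - 1)} : Finset V) := heq ▸ mem_nbrs.2 ⟨hu, ha⟩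
  rcases Finset.mem_insert.1 this with rfl | h
  · exact hc.2.1 _
  · rw [Finset.mem_singleton.1 h]; exact hc.2.1 _

lemma nbr_eq_of_deg_le_two {G : SimpleGraph V} {S : Finset V} {w a b u : V}
    (hdeg : (nbrs G S w).card ≤ 2) (ha : a ∈ S) (hb : b ∈ S) (hab : a ≠ b) (hwa : G.Adj w a)
    (hwb : G.Adj w b) (hu : u ∈ S) (hwu : G.Adj w u) : u = a ∨ u = b := by
  have hsub : ({a, b} : Finset V) ⊆ nbrs G S w := by
    intro y hy
    rw [mem_nbrs]
    rcases Finset.mem_insert.1 hy with rfl | hy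
    · exact ⟨ha, hwa⟩
    · rw [Finset.mem_singleton.1 hy]; exact ⟨hb, hwb⟩
  have heq := Finset.eq_of_subset_of_card_le hsub (by rw [Finset.card_pair hab]; exact hdeg)
  have : u ∈ ({a, b} : Finset V) := heq ▸ mem_nbrs.2 ⟨hu, hwu⟩
  simpa using this

/-- A minimal counterexample of maximum degree at most two has no vertex `p` of degree at most one:
a path starting at `p` ends within three vertices or gives a block of four. -/
lemma no_leaf {G : SimpleGraph V} {S : Finset V}
    (IH : ∀ T : Finset V, T ⊂ S → Good G T → Solved G T) (hS : Good G S) (hns : ¬ Solved G S)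
    (hdeg : ∀ w ∈ S, (nbrs G S w).card ≤ 2) {p : V} (hp : p ∈ S) :
    2 ≤ (nbrs G S p).card := by
  have hg := good_sdiff_of_deg_le_two hS hdeg
  -- a set of at most three vertices without outgoing edges can be discarded
  have small : ∀ Y : Finset V, Y ⊆ S → Y.Nonempty → Y.card ≤ 3 →
      (∀ y ∈ Y, ∀ u ∈ S, G.Adj y u → u ∈ Y) → False := fun Y hYS hne hc hcl =>
    hns (reduce IH Y ∅ hYS hne (by simp) (fun y hy _ u hu ha _ => hcl y hy u hu ha)
      (iso_of_parts (A := Y) (B := ∅) hc (by simp) (fun y hy _ => Or.inl hy) (by simp)) (hg Y))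
  by_contra hlt
  have hp1 : ∃ q ∈ S, G.Adj p q := by
    by_contra hcon
    push Not at hcon
    refine small {p} (by simpa using hp) ⟨p, by simp⟩ (by simp) ?_
    intro y hy u hu ha
    rw [Finset.mem_singleton.1 hy] at ha
    exact absurd ha (hcon u hu)
  obtain ⟨q, hq, hpq⟩ := hp1
  have hpn : ∀ u ∈ S, G.Adj p u → u = q := by
    intro u hu ha
    exact Finset.card_le_one.1 (by omega) u (mem_nbrs.2 ⟨hu, ha⟩) q (mem_nbrs.2 ⟨hq, hpq⟩)
  have hq1 : ∃ r ∈ S, G.Adj q r ∧ r ≠ p := by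
    by_contra hcon
    push Not at hcon
    refine small {p, q} (by intro y; simp; rintro (rfl | rfl) <;> assumption) ⟨p, by simp⟩
      (by have := Finset.card_le_two (a := p) (b := q); omega) ?_
    intro y hy u hu ha
    rcases Finset.mem_insert.1 hy with rfl | hy
    · simp [hpn u hu ha]
    · rw [Finset.mem_singleton.1 hy] at ha
      simp [hcon u hu ha]
  obtain ⟨r, hr, hqr, hrp⟩ := hq1
  have hqn := fun u => nbr_eq_of_deg_le_two (u := u) (hdeg q hq) hp hr hrp.symm hpq.symm hqr
  have hr1 : ∃ s ∈ S, G.Adj r s ∧ s ≠ q := by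
    by_contra hcon
    push Not at hcon
    refine small {p, q, r} (by intro y; simp; rintro (rfl | rfl | rfl) <;> assumption) ⟨p, by simp⟩
      Finset.card_le_three ?_
    intro y hy u hu ha
    simp only [Finset.mem_insert, Finset.mem_singleton] at hy
    rcases hy with rfl | rfl | rfl
    · simp [hpn u hu ha]
    · rcases hqn u hu ha with e | e <;> simp [e]
    · simp [hcon u hu ha]
  obtain ⟨s, hs, hrs, hsq⟩ := hr1
  have hsp : s ≠ p := by
    rintro rfl
    exact hqr.ne (hpn r hr hrs.symm).symm
  have hrn := fun u => nbr_eq_of_deg_le_two (u := u) (hdeg r hr) hq hs hsq.symm hqr.symm hrs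
  have hcov : ∀ y ∈ ({p, q, r, s} : Finset V), ¬ Dom G {r} y → y = p := by
    intro y hy hn
    simp only [Finset.mem_insert, Finset.mem_singleton] at hy
    rcases hy with rfl | rfl | rfl | rfl
    · rfl
    · exact absurd (Or.inr ⟨_, by simp, hqr.symm⟩) hn
    · exact absurd (Or.inl (by simp)) hn
    · exact absurd (Or.inr ⟨_, by simp, hrs⟩) hn
  refine hns (reduce IH {p, q, r, s} {r} ?_ ⟨p, by simp⟩ ?_ ?_ ?_ (hg _))
  · intro y; simp; rintro (rfl | rfl | rfl | rfl) <;> assumption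
  · have hnd : [p, q, r, s].Nodup := by
      simp [hpq.ne, hrp.symm, hsp.symm, hqr.ne, hsq.symm, hrs.ne]
    have := List.toFinset_card_of_nodup hnd
    simp at this ⊢
    omega
  · intro y hy hn u hu ha _
    obtain rfl := hcov y hy hn
    simp [hpn u hu ha]
  · refine iso_of_parts (A := {p}) (B := ∅) (by simp) (by simp) ?_ (by simp)
    intro y hy hn
    simp [hcov y hy hn]

omit [DecidableEq V] in
/-- If all degrees are at least two, there is an infinite walk that never backtracks. -/
lemma exists_walk {G : SimpleGraph V} {S : Finset V} (hne : S.Nonempty)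
    (h2 : ∀ w ∈ S, 2 ≤ (nbrs G S w).card) :
    ∃ p : ℕ → V, (∀ i, p i ∈ S) ∧ (∀ i, G.Adj (p i) (p (i + 1))) ∧ ∀ i, p (i + 2) ≠ p i := by
  have hnext : ∀ e : {e : V × V // e.1 ∈ S ∧ e.2 ∈ S ∧ G.Adj e.1 e.2},
      ∃ f : {e : V × V // e.1 ∈ S ∧ e.2 ∈ S ∧ G.Adj e.1 e.2}, f.1.1 = e.1.2 ∧ f.1.2 ≠ e.1.1 := by
    rintro ⟨⟨a, b⟩, ha, hb, hab⟩
    obtain ⟨c, hc, hca⟩ := Finset.exists_mem_ne (show 1 < (nbrs G S b).card from h2 b hb) a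
    obtain ⟨hc1, hc2⟩ := mem_nbrs.1 hc
    exact ⟨⟨(b, c), hb, hc1, hc2⟩, rfl, hca⟩
  choose nx hnx1 hnx2 using hnext
  obtain ⟨a, ha⟩ := hne
  obtain ⟨b, hb⟩ := Finset.card_pos.1 (show 0 < (nbrs G S a).card by have := h2 a ha; omega)
  let e : ℕ → {e : V × V // e.1 ∈ S ∧ e.2 ∈ S ∧ G.Adj e.1 e.2} := fun n =>
    nx^[n] ⟨(a, b), ha, (mem_nbrs.1 hb).1, (mem_nbrs.1 hb).2⟩
  have he : ∀ n, e (n + 1) = nx (e n) := fun n => Function.iterate_succ_apply' _ _ _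
  have h1 : ∀ n, (e (n + 1)).1.1 = (e n).1.2 := fun n => by rw [he]; exact hnx1 _
  refine ⟨fun n => (e n).1.1, fun n => (e n).2.1, fun n => ?_, fun n => ?_⟩
  · simp only [h1]; exact (e n).2.2.2
  · simp only [h1 (n + 1)]
    rw [he]; exact hnx2 _

/-- A minimal counterexample cannot have maximum degree at most two. -/
lemma two_regular {G : SimpleGraph V} {S : Finset V}
    (IH : ∀ T : Finset V, T ⊂ S → Good G T → Solved G T) (hS : Good G S) (hns : ¬ Solved G S)
    (hne : S.Nonempty)
    (hdeg : ∀ w ∈ S, (nbrs G S w).card ≤ 2) : False := by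
  have hg := good_sdiff_of_deg_le_two hS hdeg
  obtain ⟨p, hpS, hadj, hnb⟩ := exists_walk hne fun w hw => no_leaf IH hS hns hdeg hw
  have hn : ∀ i, ∀ u ∈ S, G.Adj (p (i + 1)) u → u = p i ∨ u = p (i + 2) := fun i u hu ha =>
    nbr_eq_of_deg_le_two (hdeg _ (hpS (i + 1))) (hpS i) (hpS (i + 2)) (hnb i).symm (hadj i).symm
      (hadj (i + 1)) hu ha
  have d0 : ∀ (D : Finset V) i, p (i + 1) ∈ D → ¬ (¬ Dom G D (p i)) := fun D i h hh =>
    hh (Or.inr ⟨_, h, (hadj i).symm⟩)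
  have d1 : ∀ (D : Finset V) i, p i ∈ D → ¬ (¬ Dom G D (p i)) := fun D i h hh => hh (Or.inl h)
  have d2 : ∀ (D : Finset V) i, p i ∈ D → ¬ (¬ Dom G D (p (i + 1))) := fun D i h hh =>
    hh (Or.inr ⟨_, h, hadj i⟩)
  by_cases hinj : Set.InjOn p (Set.Iio 9)
  · -- nine consecutive vertices: `p 1` and `p 7` leave only `p 3, p 4, p 5`
    set Y := (Finset.range 9).image p with hY
    have hYc : Y.card = 9 := by
      rw [hY, Finset.card_image_of_injOn, Finset.card_range]
      simpa [Set.InjOn] using hinj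
    have hcov : ∀ y ∈ Y, ¬ Dom G {p 1, p 7} y → y = p 3 ∨ y = p 4 ∨ y = p 5 := by
      intro y hy hnd
      obtain ⟨i, hi, rfl⟩ := Finset.mem_image.1 hy
      have hi := Finset.mem_range.1 hi
      have d : i ≠ 0 ∧ i ≠ 1 ∧ i ≠ 2 ∧ i ≠ 6 ∧ i ≠ 7 ∧ i ≠ 8 := by
        refine ⟨?_, ?_, ?_, ?_, ?_, ?_⟩ <;> rintro rfl
        exacts [d0 _ 0 (by simp) hnd, d1 _ 1 (by simp) hnd, d2 _ 1 (by simp) hnd,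
          d0 _ 6 (by simp) hnd, d1 _ 7 (by simp) hnd, d2 _ 7 (by simp) hnd]
      obtain rfl | rfl | rfl : i = 3 ∨ i = 4 ∨ i = 5 := by omega
      all_goals simp
    refine hns (reduce IH Y {p 1, p 7} ?_ ⟨p 0, ?_⟩ ?_ ?_ ?_ (hg Y))
    · intro y hy
      obtain ⟨i, -, rfl⟩ := Finset.mem_image.1 hy
      exact hpS i
    · exact Finset.mem_image_of_mem _ (by simp)
    · have := Finset.card_le_two (a := p 1) (b := p 7)
      omega
    · intro y hy hnd u hu ha _
      have hm : ∀ i < 9, p i ∈ Y := fun i hi => Finset.mem_image_of_mem _ (by simpa using hi)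
      rcases hcov y hy hnd with rfl | rfl | rfl
      · rcases hn 2 u hu ha with rfl | rfl <;> exact hm _ (by norm_num)
      · rcases hn 3 u hu ha with rfl | rfl <;> exact hm _ (by norm_num)
      · rcases hn 4 u hu ha with rfl | rfl <;> exact hm _ (by norm_num)
    · refine iso_of_parts (A := {p 3, p 4, p 5}) (B := ∅) Finset.card_le_three (by simp) ?_ (by simp)
      intro y hy hnd
      simpa using hcov y hy hnd
  -- the first repetition closes a cycle of length `k ≤ 8`
  have hex : ∃ k, k < 9 ∧ ∃ j < k, p j = p k := by
    unfold Set.InjOn at hinj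
    push Not at hinj
    obtain ⟨a, ha, b, hb, hab, hne⟩ := hinj
    rcases lt_or_gt_of_ne hne with h | h
    · exact ⟨b, hb, a, h, hab⟩
    · exact ⟨a, ha, b, h, hab.symm⟩
  obtain ⟨k, ⟨hk9, j, hjk, hpj⟩, hmin⟩ : ∃ k, (k < 9 ∧ ∃ j < k, p j = p k) ∧
      ∀ m < k, ¬ (m < 9 ∧ ∃ j < m, p j = p m) := by
    classical
    exact ⟨Nat.find hex, Nat.find_spec hex, fun m hm => Nat.find_min hex hm⟩
  have hinjk : ∀ a b, a < k → b < k → p a = p b → a = b := by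
    intro a b ha hb hab
    by_contra hne
    rcases lt_or_gt_of_ne hne with h | h
    · exact hmin b hb ⟨by omega, a, h, hab⟩
    · exact hmin a ha ⟨by omega, b, h, hab.symm⟩
  -- a repetition of an inner vertex would force a backtracking step or an earlier repetition
  have hj0 : j = 0 := by
    by_contra hj
    obtain ⟨j, rfl⟩ := Nat.exists_eq_succ_of_ne_zero hj
    obtain ⟨k, rfl⟩ := Nat.exists_eq_succ_of_ne_zero (show k ≠ 0 by omega)
    simp only [Nat.succ_eq_add_one] at *
    have ha : G.Adj (p (j + 1)) (p k) := by rw [hpj]; exact (hadj k).symm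
    rcases hn j _ (hpS k) ha with e | e
    · have := hinjk _ _ (by omega) (by omega) e
      omega
    · have hlt : j + 2 < k + 1 := by
        rcases Nat.lt_or_ge (j + 2) (k + 1) with h | h
        · exact h
        · exfalso
          have : k = j + 1 := by omega
          subst this
          exact (hadj (j + 1)).ne hpj
      have h3 := hinjk _ _ (by omega) hlt e
      subst h3
      exact hnb (j + 1) hpj.symm
  subst hj0
  have hk3 : 3 ≤ k := by
    by_contra hlt
    obtain rfl | rfl : k = 1 ∨ k = 2 := by omega
    · exact (hadj 0).ne hpj
    · exact hnb 0 hpj.symm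
  have hn0 : ∀ u ∈ S, G.Adj (p 0) u → u = p 1 ∨ u = p (k - 1) := by
    intro u hu ha
    refine nbr_eq_of_deg_le_two (hdeg _ (hpS 0)) (hpS 1) (hpS (k - 1)) ?_ (hadj 0) ?_ hu ha
    · intro e
      have := hinjk _ _ (by omega) (by omega) e
      omega
    · rw [hpj]
      have := hadj (k - 1)
      rw [Nat.sub_add_cancel (by omega)] at this
      exact this.symm
  set Y := (Finset.range k).image p with hY
  have hm : ∀ i < k, p i ∈ Y := fun i hi => Finset.mem_image_of_mem _ (by simpa using hi)
  have hYc : Y.card = k := by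
    rw [hY, Finset.card_image_of_injOn, Finset.card_range]
    intro a ha b hb hab
    simp only [Finset.coe_range, Set.mem_Iio] at ha hb
    exact hinjk a b ha hb hab
  have hcl : ∀ y ∈ Y, ∀ u ∈ S, G.Adj y u → u ∈ Y := by
    intro y hy u hu ha
    obtain ⟨i, hi, rfl⟩ := Finset.mem_image.1 hy
    have hi := Finset.mem_range.1 hi
    obtain rfl | hi0 := Nat.eq_zero_or_pos i
    · rcases hn0 u hu ha with rfl | rfl <;> exact hm _ (by omega)
    · obtain ⟨i, rfl⟩ := Nat.exists_eq_succ_of_ne_zero (show i ≠ 0 by omega)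
      rcases hn i u hu ha with rfl | rfl
      · exact hm _ (by omega)
      · rcases Nat.lt_or_ge (i + 2) k with h | h
        · exact hm _ h
        · have : i + 2 = k := by omega
          rw [this, ← hpj]
          exact hm 0 (by omega)
  have finish : ∀ D A B : Finset V, 4 * D.card ≤ k → A.card ≤ 3 → B.card ≤ 3 →
      (∀ i < k, ¬ Dom G D (p i) → p i ∈ A ∨ p i ∈ B) →
      (∀ a ∈ A, ∀ b ∈ B, ¬ G.Adj a b) → False := by
    intro D A B hD hA hB hcov hAB
    refine hns (reduce IH Y D ?_ ⟨p 0, hm 0 (by omega)⟩ (by omega)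
      (fun y hy _ u hu ha _ => hcl y hy u hu ha) (iso_of_parts hA hB ?_ hAB) (hg Y))
    · intro y hy
      obtain ⟨i, -, rfl⟩ := Finset.mem_image.1 hy
      exact hpS i
    · intro y hy
      obtain ⟨i, hi, rfl⟩ := Finset.mem_image.1 hy
      exact hcov i (Finset.mem_range.1 hi)
  by_cases hk7 : k = 7
  · subst hk7
    refine hS (fun i => p i) ⟨fun a b hab => Fin.ext (hinjk a b a.2 b.2 hab), fun i => hpS _, ?_⟩
    have hp7 : p 7 = p 0 := hpj.symm
    intro i u hu
    constructor
    · intro ha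
      fin_cases i
      · exact hn0 u hu ha
      · exact (hn 0 u hu ha).symm
      · exact (hn 1 u hu ha).symm
      · exact (hn 2 u hu ha).symm
      · exact (hn 3 u hu ha).symm
      · exact (hn 4 u hu ha).symm
      · have := (hn 5 u hu ha).symm
        rwa [hp7] at this
    · have h6 : G.Adj (p 6) (p 0) := hp7 ▸ hadj 6
      rintro (rfl | rfl)
      · fin_cases i
        exacts [hadj 0, hadj 1, hadj 2, hadj 3, hadj 4, hadj 5, h6]
      · fin_cases i
        exacts [h6.symm, (hadj 0).symm, (hadj 1).symm, (hadj 2).symm, (hadj 3).symm, (hadj 4).symm,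
          (hadj 5).symm]
  by_cases hk8 : k = 8
  · subst hk8
    refine finish {p 1, p 5} {p 3} {p 7} ?_ (by simp) (by simp) ?_ ?_
    · have := Finset.card_le_two (a := p 1) (b := p 5)
      omega
    · intro i hi hnd
      have d : i ≠ 0 ∧ i ≠ 1 ∧ i ≠ 2 ∧ i ≠ 4 ∧ i ≠ 5 ∧ i ≠ 6 := by
        refine ⟨?_, ?_, ?_, ?_, ?_, ?_⟩ <;> rintro rfl
        exacts [d0 _ 0 (by simp) hnd, d1 _ 1 (by simp) hnd, d2 _ 1 (by simp) hnd,
          d0 _ 4 (by simp) hnd, d1 _ 5 (by simp) hnd, d2 _ 5 (by simp) hnd]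
      obtain rfl | rfl : i = 3 ∨ i = 7 := by omega
      all_goals simp
    · simp only [Finset.mem_singleton, forall_eq]
      intro ha
      rcases hn 2 _ (hpS 7) ha with e | e
      · have := hinjk _ _ (by omega) (by omega) e
        omega
      · have := hinjk _ _ (by omega) (by omega) e
        omega
  · by_cases hk3' : k = 3
    · subst hk3'
      refine finish ∅ Y ∅ (by simp) (by omega) (by simp) (fun i hi _ => Or.inl (hm i hi)) (by simp)
    · refine finish {p 1} {p 3, p 4, p 5} ∅ (by simp; omega) Finset.card_le_three (by simp) ?_ (by simp)
      intro i hi hnd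
      have d : i ≠ 0 ∧ i ≠ 1 ∧ i ≠ 2 := by
        refine ⟨?_, ?_, ?_⟩ <;> rintro rfl
        exacts [d0 _ 0 (by simp) hnd, d1 _ 1 (by simp) hnd, d2 _ 1 (by simp) hnd]
      obtain rfl | rfl | rfl : i = 3 ∨ i = 4 ∨ i = 5 := by omega
      all_goals simp

/-! ### Conclusion -/

/-- A good set satisfies the bound. -/
theorem main (G : SimpleGraph V) (S : Finset V) (hS : Good G S) : Solved G S := by
  induction S using Finset.strongInduction with
  | H S IH =>
  by_contra hns
  rcases S.eq_empty_or_nonempty with rfl | hne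
  · exact hns ⟨∅, by simp, by intro a ha; simp at ha⟩
  by_cases h3 : ∃ v ∈ S, 3 ≤ (nbrs G S v).card
  · obtain ⟨v, hv, hd⟩ := h3
    exact subcubic IH hS hns (fun w hw => deg_le_three IH hS hns hw) hv hd
  · push Not at h3
    exact two_regular IH hS hns hne fun w hw => by have := h3 w hw; omega

omit [DecidableEq V] in
/-- In a connected graph an induced 7-cycle without outgoing edges is everything. -/
lemma iso_cycleGraph [Fintype V] {G : SimpleGraph V} (hconn : G.Connected) {c : Fin 7 → V}
    (hc : IsC7 G Finset.univ c) : Nonempty (G ≃g cycleGraph 7) := by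
  have hsurj : Function.Surjective c := by
    intro w
    obtain ⟨W⟩ := hconn.preconnected (c 0) w
    have : ∀ a b : V, G.Walk a b → (∃ i, c i = a) → ∃ i, c i = b := by
      intro a b W
      induction W with
      | nil => exact id
      | cons h _ ih =>
        rintro ⟨i, rfl⟩
        apply ih
        rcases (hc.2.2 i _ (Finset.mem_univ _)).1 h with e | e
        exacts [⟨_, e.symm⟩, ⟨_, e.symm⟩]
    exact this _ _ W ⟨0, rfl⟩
  refine ⟨RelIso.symm ⟨Equiv.ofBijective c ⟨hc.1, hsurj⟩, ?_⟩⟩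
  intro a b
  change G.Adj (c a) (c b) ↔ (cycleGraph 7).Adj a b
  rw [hc.adj, cycleGraph_adj]
  revert a b
  decide

end P4Iso

theorem stmt14 {V : Type*} [Fintype V] (G : SimpleGraph V)
    (hconn : G.Connected) (n : ℕ) (hn : n = Fintype.card V)
    (hne : ¬ Nonempty (G ≃g cycleGraph 7)) :
    (isolNum G (pathGraph 4) : ℚ) ≤ n / 4 := by
  classical
  obtain ⟨D, hD, hiso⟩ := P4Iso.main G Finset.univ
    (fun c hc => hne (P4Iso.iso_cycleGraph hconn hc))
  have hle : isolNum G (pathGraph 4) ≤ D.card := by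
    refine Nat.sInf_le ⟨(D : Set V), ?_, Set.ncard_coe_finset D⟩
    rintro ⟨f, hf⟩
    have hdom : ∀ i, ¬ P4Iso.Dom G D (f i).1 := fun i h => (f i).2 h
    have hinj : ∀ i j, (f i).1 = (f j).1 → i = j := fun i j h => hf (Subtype.ext h)
    have hadj : ∀ i j : Fin 4, (pathGraph 4).Adj i j → G.Adj (f i).1 (f j).1 := fun i j h =>
      f.map_rel h
    refine hiso _ (Finset.mem_univ _) _ (Finset.mem_univ _) _ (Finset.mem_univ _) _
      (Finset.mem_univ _) (hdom 0) (hdom 1) (hdom 2) (hdom 3) ?_ (hadj 0 1 ?_) (hadj 1 2 ?_)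
      (hadj 2 3 ?_)
    · have : ∀ i j, i ≠ j → (f i).1 ≠ (f j).1 := fun i j h e => h (hinj i j e)
      simp [this]
    all_goals simp [pathGraph_adj]
  rw [Finset.card_univ, ← hn] at hD
  rw [le_div_iff₀ (by norm_num)]
  exact_mod_cast (by omega : isolNum G (pathGraph 4) * 4 ≤ n)
end
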